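/- arXiv:2109.07803 — 11 statements merged into one kernel-verified Lean document; each statement's English description precedes it below -/
import Mathlib

section
/- Let L be a finite lattice with least and greatest elements, regarded as a category (with a unique morphism x ⟶ y exactly when x ≤ y), equipped with a model structure. Then the weak equivalences are decomposable: if x ≤ y ≤ z in L and the morphism x ⟶ z is a weak equivalence, then both x ⟶ y and y ⟶ z are weak equivalences. -/
universe v u

open CategoryTheory

section ModelDefs

variable {C : Type u} [Category.{v} C]

/-- `f` is a retract of `g` in the arrow category of `C`. -/
def IsRetractOfHom {X Y X' Y' : C} (f : X ⟶ Y) (g : X' ⟶ Y') : Prop :=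
  ∃ (a : X ⟶ X') (b : Y ⟶ Y') (a' : X' ⟶ X) (b' : Y' ⟶ Y),
    a ≫ a' = 𝟙 X ∧ b ≫ b' = 𝟙 Y ∧ f ≫ b = a ≫ g ∧ g ≫ b' = a' ≫ f

/-- A class of morphisms is stable under retracts (in the arrow category). -/
def StableUnderRetractsHom (P : MorphismProperty C) : Prop :=
  ∀ ⦃X Y X' Y' : C⦄ (f : X ⟶ Y) (g : X' ⟶ Y'), IsRetractOfHom f g → P g → P f

/-- A (Quillen) model structure on a category `C`: three classes of morphisms —
weak equivalences, fibrations, cofibrations — each closed under composition and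
retracts, the weak equivalences satisfying two-out-of-three, cofibrations
(resp. acyclic cofibrations) having the left lifting property against acyclic
fibrations (resp. fibrations), and every morphism factoring as a cofibration
followed by an acyclic fibration and as an acyclic cofibration followed by a
fibration. A model category is a category with all finite limits and colimits
equipped with such a structure. -/
structure ModelStructure (C : Type u) [Category.{v} C] where
  weq : MorphismProperty C
  fib : MorphismProperty C
  cof : MorphismProperty C
  weq_comp : weq.IsStableUnderComposition
  fib_comp : fib.IsStableUnderComposition
  cof_comp : cof.IsStableUnderComposition
  weq_retract : StableUnderRetractsHom weq
  fib_retract : StableUnderRetractsHom fib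
  cof_retract : StableUnderRetractsHom cof
  weq_two_out_of_three : weq.HasTwoOutOfThreeProperty
  lift_cof_trivFib : ∀ ⦃A B X Y : C⦄ (i : A ⟶ B) (p : X ⟶ Y),
    cof i → fib p → weq p → HasLiftingProperty i p
  lift_trivCof_fib : ∀ ⦃A B X Y : C⦄ (i : A ⟶ B) (p : X ⟶ Y),
    cof i → weq i → fib p → HasLiftingProperty i p
  factor_cof_trivFib : ∀ ⦃X Y : C⦄ (f : X ⟶ Y),
    ∃ (Z : C) (i : X ⟶ Z) (p : Z ⟶ Y), cof i ∧ fib p ∧ weq p ∧ i ≫ p = f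
  factor_trivCof_fib : ∀ ⦃X Y : C⦄ (f : X ⟶ Y),
    ∃ (Z : C) (i : X ⟶ Z) (p : Z ⟶ Y), cof i ∧ weq i ∧ fib p ∧ i ≫ p = f

end ModelDefs

namespace ModelStructure

variable {L : Type u} [Lattice L] (M : ModelStructure L)

theorem le_of_hasLiftingProperty {a b c d : L} (i : a ⟶ b) (p : c ⟶ d)
    [HasLiftingProperty i p] (hac : a ≤ c) (hbd : b ≤ d) : b ≤ c :=
  (CommSq.mk (Subsingleton.elim (homOfLE hac ≫ p) (i ≫ homOfLE hbd))).lift.le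

theorem weq_of_eq {a b : L} (f : a ⟶ b) (h : a = b) : M.weq f := by
  subst h
  obtain ⟨c, i, p, -, -, hp, -⟩ := M.factor_cof_trivFib f
  obtain rfl : c = a := le_antisymm p.le i.le
  rwa [Subsingleton.elim f p]

/-- A cofibrant replacement `q` of `x` followed by a fibrant replacement `r` of `q`. -/
structure BifibrantReplacement [OrderBot L] [OrderTop L] (x : L) where
  /-- The cofibrant replacement. -/
  q : L
  /-- The bifibrant replacement. -/
  r : L
  qx : q ⟶ x
  qr : q ⟶ r
  cof_q : M.cof (homOfLE (bot_le : ⊥ ≤ q))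
  fib_qx : M.fib qx
  weq_qx : M.weq qx
  cof_qr : M.cof qr
  weq_qr : M.weq qr
  fib_r : M.fib (homOfLE (le_top : r ≤ ⊤))

variable [OrderBot L] [OrderTop L]

theorem nonempty_bifibrantReplacement (x : L) : Nonempty (M.BifibrantReplacement x) := by
  obtain ⟨q, i, p, hi, hp, hpw, -⟩ := M.factor_cof_trivFib (homOfLE (bot_le : ⊥ ≤ x))
  obtain ⟨r, j, s, hj, hjw, hs, -⟩ := M.factor_trivCof_fib (homOfLE (le_top : q ≤ ⊤))
  exact ⟨⟨q, r, p, j, hi, hp, hpw, hj, hjw, hs⟩⟩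

/-- A weak equivalence from a fibrant to a cofibrant element is an equality. -/
theorem eq_of_weq {a b : L} (ha : M.fib (homOfLE (le_top : a ≤ ⊤)))
    (hb : M.cof (homOfLE (bot_le : ⊥ ≤ b))) (f : a ⟶ b) (hf : M.weq f) : a = b := by
  have := M.weq_two_out_of_three
  obtain ⟨c, i, p, hi, hiw, hp, rfl⟩ := M.factor_trivCof_fib f
  have hpw : M.weq p := M.weq.of_precomp i p hiw hf
  have := M.lift_trivCof_fib i _ hi hiw ha
  have := M.lift_cof_trivFib _ p hb hp hpw
  have hca : c ≤ a := le_of_hasLiftingProperty i (homOfLE (le_top : a ≤ ⊤)) le_rfl le_top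
  have hbc : b ≤ c := le_of_hasLiftingProperty (homOfLE (bot_le : ⊥ ≤ b)) p bot_le le_rfl
  exact le_antisymm (i ≫ p).le (hbc.trans hca)

namespace BifibrantReplacement

variable {M} {x y : L} (X : M.BifibrantReplacement x) (Y : M.BifibrantReplacement y)

theorem q_le_q (h : x ≤ y) : X.q ≤ Y.q :=
  have := M.lift_cof_trivFib _ Y.qx X.cof_q Y.fib_qx Y.weq_qx
  le_of_hasLiftingProperty (homOfLE (bot_le : ⊥ ≤ X.q)) Y.qx bot_le (X.qx.le.trans h)

theorem r_le_r (h : x ≤ y) : X.r ≤ Y.r :=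
  have := M.lift_trivCof_fib X.qr _ X.cof_qr X.weq_qr Y.fib_r
  le_of_hasLiftingProperty X.qr (homOfLE (le_top : Y.r ≤ ⊤))
    ((q_le_q X Y h).trans Y.qr.le) le_top

theorem cof_r : M.cof (homOfLE (bot_le : ⊥ ≤ X.r)) :=
  have := M.cof_comp
  M.cof.comp_mem _ X.qr X.cof_q X.cof_qr

theorem weq_iff_r_eq_r (h : x ≤ y) : M.weq (homOfLE h) ↔ X.r = Y.r := by
  have := M.weq_two_out_of_three
  let fq := homOfLE (q_le_q X Y h)
  let fr := homOfLE (r_le_r X Y h)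
  have sq_q : fq ≫ Y.qx = X.qx ≫ homOfLE h := Subsingleton.elim _ _
  have sq_r : X.qr ≫ fr = fq ≫ Y.qr := Subsingleton.elim _ _
  constructor
  · intro hw
    have hq : M.weq fq :=
      M.weq.of_postcomp fq Y.qx Y.weq_qx (by rw [sq_q]; exact M.weq.comp_mem _ _ X.weq_qx hw)
    have hr : M.weq fr :=
      M.weq.of_precomp X.qr fr X.weq_qr (by rw [sq_r]; exact M.weq.comp_mem _ _ hq Y.weq_qr)
    exact M.eq_of_weq X.fib_r Y.cof_r fr hr
  · intro hr
    have hq : M.weq fq := M.weq.of_postcomp fq Y.qr Y.weq_qr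
      (sq_r ▸ M.weq.comp_mem _ _ X.weq_qr (M.weq_of_eq fr hr))
    exact M.weq.of_precomp X.qx _ X.weq_qx (sq_q ▸ M.weq.comp_mem _ _ hq Y.weq_qx)

end BifibrantReplacement

end ModelStructure

/-- In any model structure on a finite lattice (with least and greatest
elements), the weak equivalences are decomposable. -/
theorem weq_decomposable_of_lattice (L : Type u) [Lattice L] [Fintype L]
    [OrderBot L] [OrderTop L] (M : ModelStructure L)
    (x y z : L) (hxy : x ≤ y) (hyz : y ≤ z)
    (hw : M.weq (homOfLE (hxy.trans hyz))) :
    M.weq (homOfLE hxy) ∧ M.weq (homOfLE hyz) := by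
  obtain ⟨X⟩ := M.nonempty_bifibrantReplacement x
  obtain ⟨Y⟩ := M.nonempty_bifibrantReplacement y
  obtain ⟨Z⟩ := M.nonempty_bifibrantReplacement z
  rw [X.weq_iff_r_eq_r Z] at hw
  have hXY := X.r_le_r Y hxy
  have hYZ := Y.r_le_r Z hyz
  rw [X.weq_iff_r_eq_r Y, Y.weq_iff_r_eq_r Z]
  exact ⟨hXY.antisymm (hYZ.trans hw.ge), hYZ.antisymm (hw.ge.trans hXY)⟩
end

section
/- Fix n : ℕ and a model structure on the category [n] in which every morphism is a weak equivalence (a contractible model structure). Let x ∈ [n]. If m ∈ [n] satisfies: x ≤ m, the morphism x ⟶ m is a cofibration, and for every y with x ≤ y such that x ⟶ y is a cofibration one has y ≤ m (i.e., m is the greatest target of an acyclic cofibration out of x), then m is fibrant, i.e., the morphism m ⟶ n to the terminal object is a fibration. Dually, if q ∈ [n] satisfies: q ≤ x, the morphism q ⟶ x is a fibration, and for every y with y ≤ x such that y ⟶ x is a fibration one has q ≤ y, then q is cofibrant, i.e., the morphism 0 ⟶ q from the initial object is a cofibration. -/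
universe v u

open CategoryTheory

/-- In a contractible model structure on `[n]`, the greatest target `m` of an
(acyclic) cofibration out of `x` is fibrant; dually, the least source `q` of an
(acyclic) fibration into `x` is cofibrant. -/
theorem maximal_acyclic_cofibration_target_is_fibrant (n : ℕ)
    (M : ModelStructure (Fin (n + 1)))
    (hW : ∀ ⦃x y : Fin (n + 1)⦄ (f : x ⟶ y), M.weq f) :
    (∀ (x m : Fin (n + 1)) (hxm : x ≤ m), M.cof (homOfLE hxm) →
      (∀ (y : Fin (n + 1)) (hxy : x ≤ y), M.cof (homOfLE hxy) → y ≤ m) →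
      M.fib (homOfLE (Fin.le_last m))) ∧
    (∀ (x q : Fin (n + 1)) (hqx : q ≤ x), M.fib (homOfLE hqx) →
      (∀ (y : Fin (n + 1)) (hyx : y ≤ x), M.fib (homOfLE hyx) → q ≤ y) →
      M.cof (homOfLE (Fin.zero_le q))) := by
  constructor
  · intro x m hxm hcof hmax
    obtain ⟨z, i, p, hi, -, hp, -⟩ := M.factor_trivCof_fib (homOfLE (Fin.le_last m))
    obtain rfl : z = m :=
      le_antisymm (hmax z (hxm.trans (leOfHom i)) (M.cof_comp.comp_mem _ _ hcof hi)) (leOfHom i)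
    exact hp
  · intro x q hqx hfib hmin
    obtain ⟨z, i, p, hi, hp, -, -⟩ := M.factor_cof_trivFib (homOfLE (Fin.zero_le q))
    obtain rfl : z = q :=
      le_antisymm (leOfHom p) (hmin z ((leOfHom p).trans hqx) (M.fib_comp.comp_mem _ _ hp hfib))
    exact hi
end

section
/- Fix n : ℕ and a model structure on the category [n]. Suppose a ≤ b in [n] are such that for all x, y with a ≤ x ≤ y ≤ b, the morphism x ⟶ y is a weak equivalence. Then the full subcategory of [n] on the interval {x | a ≤ x ≤ b} (itself a finite linear order, hence a category with all finite limits and colimits), equipped with the classes of weak equivalences, fibrations, and cofibrations obtained by restricting those of [n], is a model category. -/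
universe v u

open CategoryTheory

section Restriction

variable {α : Type u} [PartialOrder α]

/-- The inclusion of a subset of a partial order, as a functor of thin categories. -/
abbrev inclusionFunctor (s : Set α) : s ⥤ α :=
  Monotone.functor (f := ((↑) : s → α)) fun _ _ h => h

/-- Preimages of retract-closed classes under functors are retract-closed. -/
theorem StableUnderRetractsHom.inverseImage {C : Type*} {D : Type*} [Category C] [Category D]
    {P : MorphismProperty D} (hP : StableUnderRetractsHom P) (F : C ⥤ D) :
    StableUnderRetractsHom (P.inverseImage F) := by
  rintro X Y X' Y' f g ⟨a, b, a', b', ha, hb, h, h'⟩ hg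
  refine hP (F.map f) (F.map g) ⟨F.map a, F.map b, F.map a', F.map b', ?_, ?_, ?_, ?_⟩ hg
  · rw [← F.map_comp, ha, F.map_id]
  · rw [← F.map_comp, hb, F.map_id]
  · rw [← F.map_comp, h, F.map_comp]
  · rw [← F.map_comp, h', F.map_comp]

/-- The inclusion of a subset of a partial order reflects lifting properties. -/
theorem hasLiftingProperty_of_map_inclusionFunctor {s : Set α} {A B X Y : s}
    (i : A ⟶ B) (p : X ⟶ Y)
    (h : HasLiftingProperty ((inclusionFunctor s).map i) ((inclusionFunctor s).map p)) :
    HasLiftingProperty i p where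
  sq_hasLift sq :=
    have := h.sq_hasLift (sq.map (inclusionFunctor s))
    ⟨⟨{ l := homOfLE (show (B : α) ≤ X from leOfHom (sq.map (inclusionFunctor s)).lift)
        fac_left := Subsingleton.elim _ _
        fac_right := Subsingleton.elim _ _ }⟩⟩

/-- A model structure on a partial order restricts to every order-connected subset: factorizations
of a morphism pass through an object lying between its source and its target. -/
def ModelStructure.restrict (M : ModelStructure α) (s : Set α) [s.OrdConnected] :
    ModelStructure s where
  weq := M.weq.inverseImage (inclusionFunctor s)
  fib := M.fib.inverseImage (inclusionFunctor s)
  cof := M.cof.inverseImage (inclusionFunctor s)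
  weq_comp := have := M.weq_comp; inferInstance
  fib_comp := have := M.fib_comp; inferInstance
  cof_comp := have := M.cof_comp; inferInstance
  weq_retract := M.weq_retract.inverseImage _
  fib_retract := M.fib_retract.inverseImage _
  cof_retract := M.cof_retract.inverseImage _
  weq_two_out_of_three := have := M.weq_two_out_of_three; inferInstance
  lift_cof_trivFib _ _ _ _ i p hi hp hp' :=
    hasLiftingProperty_of_map_inclusionFunctor i p (M.lift_cof_trivFib _ _ hi hp hp')
  lift_trivCof_fib _ _ _ _ i p hi hi' hp :=
    hasLiftingProperty_of_map_inclusionFunctor i p (M.lift_trivCof_fib _ _ hi hi' hp)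
  factor_cof_trivFib X Y f := by
    obtain ⟨Z, i, p, hi, hp, hp', -⟩ := M.factor_cof_trivFib ((inclusionFunctor s).map f)
    exact ⟨⟨Z, Set.OrdConnected.out ‹_› X.2 Y.2 ⟨leOfHom i, leOfHom p⟩⟩,
      homOfLE (leOfHom i), homOfLE (leOfHom p), hi, hp, hp', Subsingleton.elim _ _⟩
  factor_trivCof_fib X Y f := by
    obtain ⟨Z, i, p, hi, hi', hp, -⟩ := M.factor_trivCof_fib ((inclusionFunctor s).map f)
    exact ⟨⟨Z, Set.OrdConnected.out ‹_› X.2 Y.2 ⟨leOfHom i, leOfHom p⟩⟩,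
      homOfLE (leOfHom i), homOfLE (leOfHom p), hi, hi', hp, Subsingleton.elim _ _⟩

end Restriction

/-- If all morphisms of `[n]` between elements of an interval `[a, b]` are weak
equivalences, then the restriction of the model structure of `[n]` to the full
subcategory on that interval is again a model structure. -/
theorem restriction_to_weq_interval_is_model_structure (n : ℕ)
    (M : ModelStructure (Fin (n + 1))) (a b : Fin (n + 1)) (hab : a ≤ b)
    (hW : ∀ (x y : Fin (n + 1)), a ≤ x → ∀ (hxy : x ≤ y), y ≤ b →
      M.weq (homOfLE hxy)) :
    ∃ M' : ModelStructure (Set.Icc a b),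
      ∀ (x y : Set.Icc a b) (h : x ≤ y),
        (M'.weq (homOfLE h) ↔ M.weq (homOfLE (Subtype.coe_le_coe.mpr h))) ∧
        (M'.fib (homOfLE h) ↔ M.fib (homOfLE (Subtype.coe_le_coe.mpr h))) ∧
        (M'.cof (homOfLE h) ↔ M.cof (homOfLE (Subtype.coe_le_coe.mpr h))) := by
  exact ⟨M.restrict (Set.Icc a b), fun _ _ _ => ⟨Iff.rfl, Iff.rfl, Iff.rfl⟩⟩
end

section
/- Fix n : ℕ and any model structure on the category [n]. Then the weak equivalences are stable under pushout and pullback along arbitrary morphisms: if x ≤ y and the morphism x ⟶ y is a weak equivalence, then (i) for every a with x ≤ a, the morphism a ⟶ max(a, y) (the pushout of x ⟶ y along x ⟶ a) is a weak equivalence, and (ii) for every b with b ≤ y, the morphism min(b, x) ⟶ b (the pullback of x ⟶ y along b ⟶ y) is a weak equivalence. In particular, every model structure on [n] is left and right proper. -/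
universe v u

open CategoryTheory

namespace ModelStructure

section PartialOrder

variable {α : Type*} [PartialOrder α] (M : ModelStructure α)

lemma weq_homOfLE_refl (x : α) : M.weq (homOfLE (le_refl x)) := by
  obtain ⟨z, i, p, -, hi, -, -⟩ := M.factor_trivCof_fib (homOfLE (le_refl x))
  obtain rfl : x = z := le_antisymm (leOfHom i) (leOfHom p)
  exact hi

/-- The pushout of an acyclic cofibration `x ⟶ z` along `x ⟶ a` with `a ≤ z` is a
weak equivalence. -/
lemma weq_of_trivCof {x a z : α} (hxa : x ≤ a) (haz : a ≤ z) (i : x ⟶ z)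
    (hc : M.cof i) (hw : M.weq i) : M.weq (homOfLE haz) := by
  obtain ⟨c, j, p, -, hj, hp, -⟩ := M.factor_trivCof_fib (homOfLE haz)
  have := M.lift_trivCof_fib i p hc hw hp
  have sq : CommSq (homOfLE (hxa.trans (leOfHom j))) i p (𝟙 z) := ⟨Subsingleton.elim _ _⟩
  obtain rfl : c = z := le_antisymm (leOfHom p) (leOfHom sq.lift)
  exact hj

/-- The pullback of an acyclic fibration `z ⟶ y` along `a ⟶ y` with `z ≤ a` is a
weak equivalence. -/
lemma weq_of_trivFib {z a y : α} (hza : z ≤ a) (hay : a ≤ y) (p : z ⟶ y)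
    (hf : M.fib p) (hw : M.weq p) : M.weq (homOfLE hza) := by
  obtain ⟨c, j, q, hj, -, hq, -⟩ := M.factor_cof_trivFib (homOfLE hza)
  have := M.lift_cof_trivFib j p hj hf hw
  have sq : CommSq (𝟙 z) j p (homOfLE ((leOfHom q).trans hay)) := ⟨Subsingleton.elim _ _⟩
  obtain rfl : z = c := le_antisymm (leOfHom j) (leOfHom sq.lift)
  exact hq

end PartialOrder

section LinearOrder

variable {α : Type*} [LinearOrder α] (M : ModelStructure α)

/-- Weak equivalences in a linear order are closed under passing to final segments. -/
lemma weq_right_of_le_of_le {x a y : α} (hxa : x ≤ a) (hay : a ≤ y)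
    (hw : M.weq (homOfLE (hxa.trans hay))) : M.weq (homOfLE hay) := by
  have := M.weq_two_out_of_three
  obtain ⟨z, i, p, hc, hi, hf, hip⟩ := M.factor_trivCof_fib (homOfLE (hxa.trans hay))
  have hp : M.weq p := M.weq.of_precomp i p hi (by rwa [hip])
  rcases le_total a z with haz | hza
  · exact M.weq.comp_mem (homOfLE haz) p (M.weq_of_trivCof hxa haz i hc hi) hp
  · exact M.weq.of_precomp (homOfLE hza) _ (M.weq_of_trivFib hza hay p hf hp) hp

/-- Weak equivalences in a linear order are closed under passing to initial segments. -/
lemma weq_left_of_le_of_le {x a y : α} (hxa : x ≤ a) (hay : a ≤ y)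
    (hw : M.weq (homOfLE (hxa.trans hay))) : M.weq (homOfLE hxa) :=
  have := M.weq_two_out_of_three
  M.weq.of_postcomp _ (homOfLE hay) (M.weq_right_of_le_of_le hxa hay hw) hw

/-- Weak equivalences in a linear order are stable under pushout. -/
lemma weq_le_max_left {x y a : α} (hxy : x ≤ y) (hw : M.weq (homOfLE hxy)) (hxa : x ≤ a) :
    M.weq (homOfLE (le_max_left a y)) := by
  have key : ∀ m (h : a ≤ m), m = max a y → M.weq (homOfLE h) := by
    rintro m h hm
    rcases le_total a y with hay | hya
    · obtain rfl : m = y := hm.trans (max_eq_right hay)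
      exact M.weq_right_of_le_of_le hxa hay hw
    · obtain rfl : m = a := hm.trans (max_eq_left hya)
      exact M.weq_homOfLE_refl m
  exact key _ _ rfl

/-- Weak equivalences in a linear order are stable under pullback. -/
lemma weq_min_le_left {x y b : α} (hxy : x ≤ y) (hw : M.weq (homOfLE hxy)) (hby : b ≤ y) :
    M.weq (homOfLE (min_le_left b x)) := by
  have key : ∀ m (h : m ≤ b), m = min b x → M.weq (homOfLE h) := by
    rintro m h hm
    rcases le_total b x with hbx | hxb
    · obtain rfl : m = b := hm.trans (min_eq_left hbx)
      exact M.weq_homOfLE_refl m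
    · obtain rfl : m = x := hm.trans (min_eq_right hxb)
      exact M.weq_left_of_le_of_le hxb hby hw
  exact key _ _ rfl

end LinearOrder

end ModelStructure

/-- In any model structure on `[n]`, weak equivalences are stable under
pushout (computed by `max`) and pullback (computed by `min`) along arbitrary
morphisms; in particular every model structure on `[n]` is proper. -/
theorem weq_stable_under_pushout_pullback (n : ℕ)
    (M : ModelStructure (Fin (n + 1)))
    (x y : Fin (n + 1)) (hxy : x ≤ y) (hw : M.weq (homOfLE hxy)) :
    (∀ (a : Fin (n + 1)), x ≤ a → M.weq (homOfLE (le_max_left a y))) ∧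
    (∀ (b : Fin (n + 1)), b ≤ y → M.weq (homOfLE (min_le_left b x))) :=
  ⟨fun _ hxa => M.weq_le_max_left hxy hw hxa, fun _ hby => M.weq_min_le_left hxy hw hby⟩
end

section
/- Fix n : ℕ and any model structure on the category [n]. Then [n] is a monoidal model category for the cartesian monoidal structure (x ⊗ y = min(x, y), unit n). Explicitly: (i) pushout-product axiom: if x ⟶ y and x' ⟶ y' are cofibrations (so x ≤ y and x' ≤ y'), then the morphism max(min(x, y'), min(y, x')) ⟶ min(y, y') is a cofibration, and it is moreover a weak equivalence whenever x ⟶ y or x' ⟶ y' is a weak equivalence; (ii) unit axiom: for every cofibrant object x (i.e., 0 ⟶ x is a cofibration) and every q such that q ⟶ n is both a fibration and a weak equivalence, the morphism min(q, x) ⟶ x is a weak equivalence. -/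
universe v u

open CategoryTheory

namespace ModelStructure

variable {α : Type u} [LinearOrder α] (M : ModelStructure α)

lemma cof_of_le_of_le {a b c : α} (hab : a ≤ b) (hbc : b ≤ c)
    (h : M.cof (homOfLE (hab.trans hbc))) : M.cof (homOfLE hbc) := by
  obtain ⟨e, i, p, hi, hp, hpw, -⟩ := M.factor_cof_trivFib (homOfLE hbc)
  have := M.lift_cof_trivFib _ p h hp hpw
  have sq : CommSq (homOfLE (hab.trans (leOfHom i))) (homOfLE (hab.trans hbc)) p (𝟙 c) :=
    ⟨Subsingleton.elim _ _⟩
  obtain rfl : e = c := le_antisymm (leOfHom p) (leOfHom sq.lift)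
  exact hi

lemma weq_of_le_of_le {a b c : α} (hab : a ≤ b) (hbc : b ≤ c)
    (h : M.cof (homOfLE (hab.trans hbc))) (hw : M.weq (homOfLE (hab.trans hbc))) :
    M.weq (homOfLE hbc) := by
  obtain ⟨e, i, p, hi, hiw, hp, -⟩ := M.factor_trivCof_fib (homOfLE hbc)
  have := M.lift_trivCof_fib _ p h hw hp
  have sq : CommSq (homOfLE (hab.trans (leOfHom i))) (homOfLE (hab.trans hbc)) p (𝟙 c) :=
    ⟨Subsingleton.elim _ _⟩
  obtain rfl : e = c := le_antisymm (leOfHom p) (leOfHom sq.lift)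
  exact hiw

lemma cof_of_eq {a b : α} (h : a = b) : M.cof (homOfLE h.le) := by
  subst h
  obtain ⟨e, i, p, hi, -⟩ := M.factor_cof_trivFib (𝟙 a)
  obtain rfl : e = a := le_antisymm (leOfHom p) (leOfHom i)
  exact hi

lemma weq_of_eq_s7 {a b : α} (h : a = b) : M.weq (homOfLE h.le) := by
  subst h
  obtain ⟨e, i, p, -, hi, -⟩ := M.factor_trivCof_fib (𝟙 a)
  obtain rfl : e = a := le_antisymm (leOfHom p) (leOfHom i)
  exact hi

/-- A morphism `b ⟶ c` is a weak equivalence if some acyclic cofibration `a ⟶ d` with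
`a ≤ b` and `c ≤ d` factors through it. -/
lemma weq_of_le_of_le_of_le {a b c d : α} (hab : a ≤ b) (hbc : b ≤ c) (hcd : c ≤ d)
    (h : M.cof (homOfLE (hab.trans (hbc.trans hcd))))
    (hw : M.weq (homOfLE (hab.trans (hbc.trans hcd)))) : M.weq (homOfLE hbc) := by
  have := M.weq_two_out_of_three
  exact M.weq.of_postcomp (homOfLE hbc) (homOfLE hcd)
    (M.weq_of_le_of_le (hab.trans hbc) hcd h hw)
    (M.weq_of_le_of_le hab (hbc.trans hcd) h hw)

/-- The pushout-product axiom for `min`, when the codomains are ordered. -/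
lemma pushoutProduct_of_le {x y x' y' s t : α} (hxy : x ≤ y) (hx'y' : x' ≤ y') (hyy' : y ≤ y')
    (hs : s = max (min x y') (min y x')) (ht : t = min y y') (hst : s ≤ t)
    (hc : M.cof (homOfLE hxy)) (hc' : M.cof (homOfLE hx'y')) :
    M.cof (homOfLE hst) ∧
      (M.weq (homOfLE hxy) ∨ M.weq (homOfLE hx'y') → M.weq (homOfLE hst)) := by
  rw [min_eq_left (hxy.trans hyy')] at hs
  obtain rfl : t = y := ht.trans (min_eq_left hyy')
  have hxs : x ≤ s := hs ▸ le_max_left _ _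
  rcases le_total t x' with htx' | hx't
  · have hts : s = t := by rw [hs, min_eq_left htx', max_eq_right hxy]
    exact ⟨M.cof_of_eq hts, fun _ ↦ M.weq_of_eq_s7 hts⟩
  · have hx's : x' ≤ s := by
      rw [hs, min_eq_right hx't]
      exact le_max_right _ _
    refine ⟨M.cof_of_le_of_le hxs hst hc, ?_⟩
    rintro (hw | hw)
    · exact M.weq_of_le_of_le hxs hst hc hw
    · exact M.weq_of_le_of_le_of_le hx's hst hyy' hc' hw

end ModelStructure

/-- Any model structure on `[n]` is monoidal for the cartesian monoidal
structure `x ⊗ y = min x y` with unit `n`: the pushout-product axiom and the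
unit axiom hold. -/
theorem cartesian_monoidal_model_structure (n : ℕ)
    (M : ModelStructure (Fin (n + 1))) :
    (∀ (x y x' y' : Fin (n + 1)) (hxy : x ≤ y) (hx'y' : x' ≤ y'),
      M.cof (homOfLE hxy) → M.cof (homOfLE hx'y') →
      (M.cof (homOfLE (max_le (min_le_min hxy (le_refl y'))
          (min_le_min (le_refl y) hx'y') :
          max (min x y') (min y x') ≤ min y y')) ∧
        ((M.weq (homOfLE hxy) ∨ M.weq (homOfLE hx'y')) →
          M.weq (homOfLE (max_le (min_le_min hxy (le_refl y'))
            (min_le_min (le_refl y) hx'y') :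
            max (min x y') (min y x') ≤ min y y'))))) ∧
    (∀ (x : Fin (n + 1)), M.cof (homOfLE (Fin.zero_le x)) →
      ∀ (q : Fin (n + 1)), M.fib (homOfLE (Fin.le_last q)) →
        M.weq (homOfLE (Fin.le_last q)) →
        M.weq (homOfLE (min_le_right q x : min q x ≤ x))) := by
  refine ⟨fun x y x' y' hxy hx'y' hc hc' ↦ ?_, fun x hx q hq hqw ↦ ?_⟩
  · rcases le_total y y' with h | h
    · exact M.pushoutProduct_of_le hxy hx'y' h rfl rfl _ hc hc'
    · rw [or_comm]
      exact M.pushoutProduct_of_le hx'y' hxy h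
        (by rw [max_comm, min_comm y x', min_comm x y']) (min_comm _ _) _ hc' hc
  · have := M.lift_cof_trivFib _ _ hx hq hqw
    have sq : CommSq (homOfLE (Fin.zero_le q)) (homOfLE (Fin.zero_le x))
        (homOfLE (Fin.le_last q)) (homOfLE (Fin.le_last x)) := ⟨Subsingleton.elim _ _⟩
    exact M.weq_of_eq_s7 (min_eq_right (leOfHom sq.lift))
end

section
/- Fix n : ℕ and a model structure on the category [n]. Say that x and y are weakly equivalent if the morphism min(x, y) ⟶ max(x, y) is a weak equivalence. Then every weak equivalence class contains a unique bifibrant object: for every x ∈ [n] there exists exactly one z ∈ [n] that is weakly equivalent to x and such that 0 ⟶ z is a cofibration and z ⟶ n is a fibration. -/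
universe v u

open CategoryTheory

namespace ModelStructure

section Preorder

variable {α : Type u} [Preorder α] (M : ModelStructure α)

theorem weq_homOfLE_congr {a b a' b' : α} (ha : a = a') (hb : b = b') (h : a ≤ b)
    (h' : a' ≤ b') : M.weq (homOfLE h) ↔ M.weq (homOfLE h') := by
  subst ha hb
  rfl

/-- In a preorder, a weak equivalence from a fibrant object (relative to `t`) to a cofibrant
object (relative to `b`) is invertible. -/
theorem le_of_weq_of_fib_of_cof {b t z z' : α} (h : z ≤ z') (hbz : b ≤ z) (hbz' : b ≤ z')
    (hzt : z ≤ t) (hz't : z' ≤ t) (hw : M.weq (homOfLE h)) (hc : M.cof (homOfLE hbz'))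
    (hf : M.fib (homOfLE hzt)) : z' ≤ z := by
  have := M.weq_two_out_of_three
  obtain ⟨c, i, p, hi, hiw, hp, hip⟩ := M.factor_trivCof_fib (homOfLE h)
  have hpw : M.weq p := M.weq.of_precomp i p hiw (hip ▸ hw)
  have lift_i := M.lift_trivCof_fib i (homOfLE hzt) hi hiw hf
  have sq_i : CommSq (𝟙 z) i (homOfLE hzt) (homOfLE (p.le.trans hz't)) :=
    ⟨Subsingleton.elim _ _⟩
  have lift_p := M.lift_cof_trivFib (homOfLE hbz') p hc hp hpw
  have sq_p : CommSq (homOfLE (hbz.trans i.le)) (homOfLE hbz') p (𝟙 z') :=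
    ⟨Subsingleton.elim _ _⟩
  exact sq_p.lift.le.trans sq_i.lift.le

end Preorder

section LinearOrder

variable {α : Type u} [LinearOrder α] (M : ModelStructure α)

/-- Two objects of a linear order are weakly equivalent if the morphism from the smaller
to the larger one is a weak equivalence. -/
def WeakEquiv (a b : α) : Prop :=
  M.weq (homOfLE (min_le_max : min a b ≤ max a b))

theorem weakEquiv_comm {a b : α} : M.WeakEquiv a b ↔ M.WeakEquiv b a :=
  M.weq_homOfLE_congr (min_comm a b) (max_comm a b) _ _

theorem weakEquiv_iff_of_le {a b : α} (h : a ≤ b) :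
    M.WeakEquiv a b ↔ M.weq (homOfLE h) :=
  M.weq_homOfLE_congr (min_eq_left h) (max_eq_right h) _ _

theorem WeakEquiv.trans {a b c : α} (hab : M.WeakEquiv a b) (hbc : M.WeakEquiv b c) :
    M.WeakEquiv a c := by
  wlog hac : a ≤ c generalizing a c
  · exact M.weakEquiv_comm.1 (this (M.weakEquiv_comm.1 hbc) (M.weakEquiv_comm.1 hab)
      (le_of_not_ge hac))
  have := M.weq_two_out_of_three
  rw [weakEquiv_iff_of_le M hac]
  rcases le_total a b with h₁ | h₁
  · rw [weakEquiv_iff_of_le M h₁] at hab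
    rcases le_total b c with h₂ | h₂
    · rw [weakEquiv_iff_of_le M h₂] at hbc
      exact M.weq.comp_mem (homOfLE h₁) (homOfLE h₂) hab hbc
    · rw [weakEquiv_comm, weakEquiv_iff_of_le M h₂] at hbc
      exact M.weq.of_postcomp (homOfLE hac) (homOfLE h₂) hbc hab
  · rw [weakEquiv_comm, weakEquiv_iff_of_le M h₁] at hab
    rw [weakEquiv_iff_of_le M (h₁.trans hac)] at hbc
    exact M.weq.of_precomp (homOfLE h₁) (homOfLE hac) hab hbc

end LinearOrder

end ModelStructure

/-- For any model structure on `[n]`, every weak equivalence class contains a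
unique bifibrant object: say `x` and `z` are weakly equivalent when the
morphism `min x z ⟶ max x z` is a weak equivalence; then for every `x` there is
exactly one `z` weakly equivalent to `x` with `0 ⟶ z` a cofibration and
`z ⟶ n` a fibration. -/
theorem unique_bifibrant_in_each_weq_class (n : ℕ)
    (M : ModelStructure (Fin (n + 1))) (x : Fin (n + 1)) :
    ∃! z : Fin (n + 1),
      M.weq (homOfLE (min_le_max : min x z ≤ max x z)) ∧
      M.cof (homOfLE (Fin.zero_le z)) ∧
      M.fib (homOfLE (Fin.le_last z)) := by
  have := M.cof_comp
  obtain ⟨c, i, p, hi, -, hpw, -⟩ := M.factor_cof_trivFib (homOfLE (Fin.zero_le x))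
  obtain ⟨z, j, q, hj, hjw, hq, -⟩ := M.factor_trivCof_fib (homOfLE (Fin.le_last c))
  have hxc : M.WeakEquiv x c := M.weakEquiv_comm.1 ((M.weakEquiv_iff_of_le p.le).2 hpw)
  have hcz : M.WeakEquiv c z := (M.weakEquiv_iff_of_le j.le).2 hjw
  have hxz : M.WeakEquiv x z := hxc.trans M hcz
  have hz : M.cof (homOfLE (Fin.zero_le z)) := M.cof.comp_mem i j hi hj
  refine ⟨z, ⟨hxz, hz, hq⟩, ?_⟩
  rintro y ⟨hxy : M.WeakEquiv x y, hy, hy'⟩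
  have hyz : M.WeakEquiv y z := (M.weakEquiv_comm.1 hxy).trans M hxz
  rcases le_total y z with h | h
  · exact le_antisymm h (M.le_of_weq_of_fib_of_cof h (Fin.zero_le y) (Fin.zero_le z)
      (Fin.le_last y) (Fin.le_last z) ((M.weakEquiv_iff_of_le h).1 hyz) hz hy')
  · exact le_antisymm (M.le_of_weq_of_fib_of_cof h (Fin.zero_le z) (Fin.zero_le y)
      (Fin.le_last z) (Fin.le_last y)
      ((M.weakEquiv_iff_of_le h).1 (M.weakEquiv_comm.1 hyz)) hy hq) h
end

section
/- For every positive integer n, the binomial coefficient C(2n−1, n) equals the sum, over all compositions c of n, of the product of the Catalan numbers of the blocks of c: C(2n−1, n) = ∑_{c a composition of n} ∏_{i} catalan(cᵢ), where the sum runs over ordered tuples of positive integers summing to n and cᵢ ranges over the blocks of c. -/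
open PowerSeries in
/-- The central binomial series `B` and the Catalan series `C` satisfy `B * (1 - 2 * X * C) = 1`. -/
theorem mk_centralBinom_mul_one_sub_catalanSeries :
    (mk fun n ↦ (n.centralBinom : ℤ)) *
      (1 - 2 * X * catalanSeries.map (Nat.castRingHom ℤ)) = 1 := by
  set C := catalanSeries.map (Nat.castRingHom ℤ) with hC
  have hquad : C ^ 2 * X + 1 = C := by
    simpa using congrArg (PowerSeries.map (Nat.castRingHom ℤ)) catalanSeries_sq_mul_X_add_one
  have hderiv : derivative ℤ (X * C) = mk fun n ↦ (n.centralBinom : ℤ) := by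
    ext n
    rw [coeff_derivative, coeff_succ_X_mul, coeff_mk, ← succ_mul_catalan_eq_centralBinom]
    simp [hC, mul_comm]
  have hsq : X * C = X + (X * C) * (X * C) := by linear_combination -X * hquad
  have h := congrArg (derivative ℤ) hsq
  rw [map_add, derivative_X, Derivation.leibniz (D := derivative ℤ) (X * C) (X * C), hderiv,
    smul_eq_mul] at h
  linear_combination h

/-- Splitting off the first block of a composition. -/
theorem Composition.sum_prod_map_blocks_succ {R : Type*} [CommSemiring R] (f : ℕ → R) (n : ℕ) :
    ∑ c : Composition (n + 1), (c.blocks.map f).prod =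
      ∑ p ∈ Finset.HasAntidiagonal.antidiagonal n,
        f (p.1 + 1) * ∑ c : Composition p.2, (c.blocks.map f).prod := by
  rw [Finset.Nat.sum_antidiagonal_eq_sum_range_succ
    (fun i j ↦ f (i + 1) * ∑ c : Composition j, (c.blocks.map f).prod), Finset.sum_range]
  simp_rw [Finset.mul_sum]
  rw [← Fintype.sum_sigma' (fun (i : Fin (n + 1)) (c : Composition (n - i)) ↦
    f (i + 1) * (c.blocks.map f).prod)]
  symm
  let cons : (Σ i : Fin (n + 1), Composition (n - i)) → Composition (n + 1) := fun x ↦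
    { blocks := (x.1 + 1) :: x.2.blocks
      blocks_pos := by
        intro i hi
        rcases List.mem_cons.1 hi with rfl | hi
        · exact Nat.succ_pos _
        · exact x.2.blocks_pos hi
      blocks_sum := by
        have := x.1.is_lt
        rw [List.sum_cons, x.2.blocks_sum]
        lia }
  refine Fintype.sum_bijective cons ⟨?_, ?_⟩ _ _ fun x ↦ by simp [cons]
  · rintro ⟨i, c⟩ ⟨j, d⟩ h
    obtain ⟨hij, hcd⟩ := List.cons.inj (congrArg Composition.blocks h)
    obtain rfl : i = j := Fin.ext (Nat.succ.inj hij)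
    exact congrArg (Sigma.mk i) (Composition.ext hcd)
  · rintro ⟨_ | ⟨b, l⟩, hpos, hsum⟩
    · simp at hsum
    · have hb : 0 < b := hpos List.mem_cons_self
      rw [List.sum_cons] at hsum
      refine ⟨⟨⟨b - 1, by lia⟩, ⟨l, fun h ↦ hpos (List.mem_cons_of_mem _ h), ?_⟩⟩, ?_⟩
      · simp only
        lia
      · ext1
        simp only [cons]
        rw [Nat.sub_add_cancel hb]

open PowerSeries in
/-- Twice the generating function of the Catalan products summed over compositions is one plus the
central binomial series. -/
theorem two_mul_sum_composition_prod_catalan_series :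
    2 * (mk fun n ↦ ((∑ c : Composition n, (c.blocks.map catalan).prod : ℕ) : ℤ)) =
      1 + mk fun n ↦ (n.centralBinom : ℤ) := by
  have hB := mk_centralBinom_mul_one_sub_catalanSeries
  set B : ℤ⟦X⟧ := mk fun n ↦ (n.centralBinom : ℤ)
  set C := catalanSeries.map (Nat.castRingHom ℤ) with hC
  set S : ℤ⟦X⟧ := mk fun n ↦ ((∑ c : Composition n, (c.blocks.map catalan).prod : ℕ) : ℤ) with hS
  have hquad : C ^ 2 * X + 1 = C := by
    simpa using congrArg (PowerSeries.map (Nat.castRingHom ℤ)) catalanSeries_sq_mul_X_add_one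
  have htail : C = 1 + X * mk fun n ↦ (catalan (n + 1) : ℤ) := by
    ext (_ | n) <;> simp [hC, coeff_succ_X_mul, coeff_one]
  have hrec : S = 1 + X * ((mk fun n ↦ (catalan (n + 1) : ℤ)) * S) := by
    ext (_ | n)
    · have hnil (c : Composition 0) : c.blocks = [] := c.blocks_eq_nil.2 rfl
      simp [hS, hnil, composition_card]
    · rw [map_add, coeff_succ_X_mul, coeff_mul, hS, coeff_mk,
        Composition.sum_prod_map_blocks_succ]
      simp [coeff_one]
  have hSC : S * (2 - C) = 1 := by linear_combination hrec - S * htail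
  have hBC : (1 + B) * (2 - C) = 2 := by
    linear_combination (-(1 + B) * (2 - C) + 2 + (2 - C) * B) * hB + 2 * B * hquad
  linear_combination (1 + B) * hSC - S * hBC

/-- For every positive integer `n`, `C(2n-1, n)` equals the sum over all
compositions `c` of `n` of the product of the Catalan numbers of the blocks of
`c`. -/
theorem choose_eq_sum_compositions_prod_catalan (n : ℕ) (hn : 0 < n) :
    Nat.choose (2 * n - 1) n =
      ∑ c : Composition n, (c.blocks.map catalan).prod := by
  obtain ⟨m, rfl⟩ := Nat.exists_eq_succ_of_ne_zero hn.ne'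
  have h := congrArg (PowerSeries.coeff (m + 1)) two_mul_sum_composition_prod_catalan_series
  rw [two_mul, map_add, map_add, PowerSeries.coeff_mk, PowerSeries.coeff_mk,
    PowerSeries.coeff_one, if_neg m.succ_ne_zero, zero_add] at h
  have hchoose : (m + 1).centralBinom = 2 * (2 * m + 1).choose (m + 1) := by
    rw [Nat.centralBinom_eq_two_mul_choose, show 2 * (m + 1) = 2 * m + 1 + 1 by lia,
      Nat.choose_succ_succ, ← Nat.choose_symm_half, ← two_mul]
  rw [show 2 * m.succ - 1 = 2 * m + 1 by lia]
  norm_cast at h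
  lia
end

section
/- For every n : ℕ, the number of transfer systems on the linear order Fin (n+1) (with lattice operations min and max) is the Catalan number catalan(n+1). -/
/-- A transfer system on a lattice `L`: a binary relation refining `≤`,
reflexive, transitive, and closed under restriction. -/
structure TransferSystem (L : Type*) [Lattice L] where
  rel : L → L → Prop
  le_of_rel : ∀ x y, rel x y → x ≤ y
  refl : ∀ x, rel x x
  trans : ∀ x y z, rel x y → rel y z → rel x z
  restrict : ∀ x y z, rel x y → z ≤ y → rel (x ⊓ z) z

/-- Transfer systems on the chain `0 < 1 < ⋯ < n - 1`, as relations on `ℕ` supported on `{0, …, n - 1}`.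
On a chain, closure under restriction says that the relation is closed under lowering the target. -/
structure IsChainTransfer (n : ℕ) (R : ℕ → ℕ → Prop) : Prop where
  le_of_rel : ∀ x y, R x y → x ≤ y
  lt_of_rel : ∀ x y, R x y → y < n
  refl : ∀ x, x < n → R x x
  trans : ∀ x y z, R x y → R y z → R x z
  restrict : ∀ x y z, R x y → x ≤ z → z ≤ y → R x z

theorem TransferSystem.rel_injective (L : Type*) [Lattice L] :
    Function.Injective (TransferSystem.rel (L := L)) := by
  rintro ⟨⟩ ⟨⟩ h
  cases h
  rfl

instance TransferSystem.finite (L : Type*) [Lattice L] [Finite L] : Finite (TransferSystem L) :=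
  Finite.of_injective _ (TransferSystem.rel_injective L)

/-- Transfer systems on `Fin n`, extended by the empty relation outside `{0, …, n - 1}`. -/
def transferSystemFinEquiv (n : ℕ) : TransferSystem (Fin n) ≃ {R // IsChainTransfer n R} where
  toFun T := ⟨fun x y => ∃ (hx : x < n) (hy : y < n), T.rel ⟨x, hx⟩ ⟨y, hy⟩,
    { le_of_rel := fun _ _ ⟨_, _, h⟩ => T.le_of_rel _ _ h
      lt_of_rel := fun _ _ ⟨_, hy, _⟩ => hy
      refl := fun _ hx => ⟨hx, hx, T.refl _⟩
      trans := fun _ _ _ ⟨hx, _, h⟩ ⟨_, hz, h'⟩ => ⟨hx, hz, T.trans _ _ _ h h'⟩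
      restrict := fun x y z ⟨hx, hy, h⟩ hxz hzy => by
        have hz : z < n := hzy.trans_lt hy
        have key := T.restrict _ _ ⟨z, hz⟩ h hzy
        rw [inf_eq_left.2 (show (⟨x, hx⟩ : Fin n) ≤ ⟨z, hz⟩ from hxz)] at key
        exact ⟨hx, hz, key⟩ }⟩
  invFun R :=
    { rel := fun x y => R.1 x y
      le_of_rel := fun _ _ h => R.2.le_of_rel _ _ h
      refl := fun x => R.2.refl _ x.2
      trans := fun _ _ _ h h' => R.2.trans _ _ _ h h'
      restrict := fun x y z h hzy => by
        rcases le_total x z with hxz | hzx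
        · rw [inf_eq_left.2 hxz]
          exact R.2.restrict _ _ _ h hxz hzy
        · rw [inf_eq_right.2 hzx]
          exact R.2.refl _ z.2 }
  left_inv T := by
    apply TransferSystem.rel_injective
    funext x y
    simp
  right_inv R := by
    apply Subtype.ext
    funext x y
    have h₁ := R.2.le_of_rel x y
    have h₂ := R.2.lt_of_rel x y
    simp only [exists_prop, eq_iff_iff]
    exact ⟨fun h => h.2.2, fun h => ⟨(h₁ h).trans_lt (h₂ h), h₂ h, h⟩⟩

instance (n : ℕ) : Finite {R // IsChainTransfer n R} :=
  Finite.of_equiv _ (transferSystemFinEquiv n)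

/-- The relation in which `0` is related exactly to `0, …, k`, and which restricts to `A` on
`{1, …, k}` and to `B` on `{k + 1, k + 2, …}`. -/
def glue (k : ℕ) (A B : ℕ → ℕ → Prop) (x y : ℕ) : Prop :=
  (x = 0 ∧ y ≤ k) ∨ (1 ≤ x ∧ 1 ≤ y ∧ y ≤ k ∧ A (x - 1) (y - 1)) ∨
    (k + 1 ≤ x ∧ k + 1 ≤ y ∧ B (x - (k + 1)) (y - (k + 1)))

theorem IsChainTransfer.glue {m k : ℕ} (hk : k ≤ m) {A B : ℕ → ℕ → Prop}
    (hA : IsChainTransfer k A) (hB : IsChainTransfer (m - k) B) :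
    IsChainTransfer (m + 1) (glue k A B) where
  le_of_rel x y h := by
    rcases h with h | ⟨_, _, _, h⟩ | ⟨_, _, h⟩
    · omega
    · have := hA.le_of_rel _ _ h; omega
    · have := hB.le_of_rel _ _ h; omega
  lt_of_rel x y h := by
    rcases h with h | h | ⟨_, _, h⟩
    · omega
    · omega
    · have := hB.lt_of_rel _ _ h; omega
  refl x hx := by
    rcases Nat.eq_zero_or_pos x with h0 | h0
    · exact .inl ⟨h0, by omega⟩
    · rcases le_or_gt x k with h | h
      · exact .inr (.inl ⟨h0, h0, h, hA.refl _ (by omega)⟩)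
      · exact .inr (.inr ⟨h, h, hB.refl _ (by omega)⟩)
  trans x y z h h' := by
    rcases h with h | ⟨h₁, h₂, h₃, h⟩ | ⟨h₁, h₂, h⟩ <;>
    rcases h' with h' | ⟨h₁', h₂', h₃', h'⟩ | ⟨h₁', h₂', h'⟩ <;> try omega
    · exact .inl ⟨h.1, h'.2⟩
    · exact .inl ⟨h.1, h₃'⟩
    · exact .inr (.inl ⟨h₁, h₂', h₃', hA.trans _ _ _ h h'⟩)
    · have := hA.le_of_rel _ _ h'
      omega
    · exact .inr (.inr ⟨h₁, h₂', hB.trans _ _ _ h h'⟩)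
  restrict x y z h hxz hzy := by
    rcases h with h | ⟨h₁, h₂, h₃, h⟩ | ⟨h₁, h₂, h⟩
    · exact .inl ⟨h.1, hzy.trans h.2⟩
    · exact .inr (.inl ⟨h₁, by omega, by omega,
        hA.restrict _ _ _ h (by omega) (by omega)⟩)
    · exact .inr (.inr ⟨h₁, by omega, hB.restrict _ _ _ h (by omega) (by omega)⟩)

theorem glue_zero_left {k : ℕ} {A B : ℕ → ℕ → Prop} {y : ℕ} : glue k A B 0 y ↔ y ≤ k := by
  simp [glue]

theorem glue_succ_succ {k : ℕ} {A B : ℕ → ℕ → Prop} {x y : ℕ} (hy : y < k) :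
    glue k A B (x + 1) (y + 1) ↔ A x y := by
  simp only [glue, Nat.add_sub_cancel]
  constructor
  · rintro (h | h | h)
    · omega
    · exact h.2.2.2
    · omega
  · exact fun h => .inr (.inl ⟨by omega, by omega, by omega, h⟩)

theorem glue_add_add {k : ℕ} {A B : ℕ → ℕ → Prop} {x y : ℕ} :
    glue k A B (x + (k + 1)) (y + (k + 1)) ↔ B x y := by
  simp only [glue, Nat.add_sub_cancel]
  constructor
  · rintro (h | h | h)
    · omega
    · omega
    · exact h.2.2
  · exact fun h => .inr (.inr ⟨by omega, by omega, h⟩)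

/-- A transfer system on a nonempty chain is glued from two shorter ones. -/
theorem IsChainTransfer.exists_eq_glue {m : ℕ} {R : ℕ → ℕ → Prop}
    (hR : IsChainTransfer (m + 1) R) :
    ∃ k ≤ m, ∃ A B, IsChainTransfer k A ∧ IsChainTransfer (m - k) B ∧ _root_.glue k A B = R := by
  classical
  obtain ⟨k, hk, hmax⟩ : ∃ k, R 0 k ∧ ∀ y, R 0 y → y ≤ k :=
    ⟨Nat.findGreatest (R 0) m, Nat.findGreatest_spec (Nat.zero_le m) (hR.refl 0 m.succ_pos),
      fun y hy => Nat.le_findGreatest (Nat.le_of_lt_succ (hR.lt_of_rel _ _ hy)) hy⟩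
  have hkm : k < m + 1 := hR.lt_of_rel _ _ hk
  have hstay : ∀ x y, x ≤ k → R x y → y ≤ k := fun x y hx hxy =>
    hmax y (hR.trans _ _ _ (hR.restrict _ _ _ hk x.zero_le hx) hxy)
  refine ⟨k, by omega, fun x y => y < k ∧ R (x + 1) (y + 1),
    fun x y => R (x + (k + 1)) (y + (k + 1)), ?_, ?_, ?_⟩
  · refine ⟨?_, fun _ _ h => h.1, fun x hx => ⟨hx, hR.refl _ (by omega)⟩,
      fun _ _ _ h h' => ⟨h'.1, hR.trans _ _ _ h.2 h'.2⟩,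
      fun _ _ _ h h₁ h₂ => ⟨h₂.trans_lt h.1, hR.restrict _ _ _ h.2 (by omega) (by omega)⟩⟩
    intro x y h
    have := hR.le_of_rel _ _ h.2
    omega
  · refine ⟨?_, ?_, fun x hx => hR.refl _ (by omega),
      fun _ _ _ h h' => hR.trans _ _ _ h h',
      fun _ _ _ h h₁ h₂ => hR.restrict _ _ _ h (by omega) (by omega)⟩
    · intro x y h
      have := hR.le_of_rel _ _ h
      omega
    · intro x y h
      have := hR.lt_of_rel _ _ h
      omega
  · funext x y
    apply propext
    constructor
    · rintro (⟨rfl, h⟩ | ⟨h₁, h₂, h₃, h₄, h⟩ | ⟨h₁, h₂, h⟩)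
      · exact hR.restrict _ _ _ hk y.zero_le h
      · simpa only [Nat.sub_add_cancel h₁, Nat.sub_add_cancel h₂] using h
      · simpa only [Nat.sub_add_cancel h₁, Nat.sub_add_cancel h₂] using h
    · intro h
      have hxy := hR.le_of_rel _ _ h
      rcases Nat.eq_zero_or_pos x with rfl | h0
      · exact .inl ⟨rfl, hmax y h⟩
      · have hy : 1 ≤ y := by omega
        rcases le_or_gt x k with hx | hx
        · have := hstay x y hx h
          refine .inr (.inl ⟨h0, hy, this, by omega, ?_⟩)
          rwa [Nat.sub_add_cancel h0, Nat.sub_add_cancel hy]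
        · have hy' : k + 1 ≤ y := by omega
          refine .inr (.inr ⟨hx, hy', ?_⟩)
          simpa only [Nat.sub_add_cancel (Nat.succ_le_of_lt hx), Nat.sub_add_cancel hy'] using h

/-- Gluing, as a map between types of transfer systems on chains. -/
def glueSigma (m : ℕ)
    (p : Σ k : Fin m.succ, {R // IsChainTransfer k R} × {R // IsChainTransfer (m - k) R}) :
    {R // IsChainTransfer (m + 1) R} :=
  ⟨glue p.1 p.2.1.1 p.2.2.1, p.2.1.2.glue (Nat.le_of_lt_succ p.1.2) p.2.2.2⟩

theorem glueSigma_bijective (m : ℕ) : Function.Bijective (glueSigma m) := by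
  constructor
  · rintro ⟨k, ⟨A, hA⟩, ⟨B, hB⟩⟩ ⟨k', ⟨A', hA'⟩, ⟨B', hB'⟩⟩ h
    have h : ∀ x y, glue k A B x y ↔ glue k' A' B' x y := fun x y =>
      iff_of_eq (congrFun (congrFun (congrArg Subtype.val h) x) y)
    obtain rfl : k = k' := by
      have h₁ := h 0 k
      have h₂ := h 0 k'
      simp only [glue_zero_left] at h₁ h₂
      apply Fin.ext
      omega
    obtain rfl : A = A' := by
      funext x y
      apply propext
      by_cases hy : y < k
      · exact (glue_succ_succ hy).symm.trans ((h _ _).trans (glue_succ_succ hy))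
      · exact iff_of_false (fun e => hy (hA.lt_of_rel _ _ e)) (fun e => hy (hA'.lt_of_rel _ _ e))
    obtain rfl : B = B' := by
      funext x y
      exact propext (glue_add_add.symm.trans ((h _ _).trans glue_add_add))
    rfl
  · rintro ⟨R, hR⟩
    obtain ⟨k, hk, A, B, hA, hB, rfl⟩ := hR.exists_eq_glue
    exact ⟨⟨⟨k, Nat.lt_succ_of_le hk⟩, ⟨A, hA⟩, ⟨B, hB⟩⟩, rfl⟩

theorem card_isChainTransfer (n : ℕ) : Nat.card {R // IsChainTransfer n R} = catalan n := by
  induction n using Nat.strong_induction_on with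
  | _ n ih =>
    cases n with
    | zero =>
      rw [catalan_zero, Nat.card_eq_one_iff_unique]
      refine ⟨⟨fun R S => Subtype.ext ?_⟩, ⟨fun _ _ => False, by constructor <;> simp⟩⟩
      funext x y
      exact propext (iff_of_false (fun h => Nat.not_lt_zero _ (R.2.lt_of_rel _ _ h))
        (fun h => Nat.not_lt_zero _ (S.2.lt_of_rel _ _ h)))
    | succ m =>
      rw [← Nat.card_congr (Equiv.ofBijective _ (glueSigma_bijective m)), Nat.card_sigma,
        catalan_succ]
      refine Finset.sum_congr rfl fun k _ => ?_
      rw [Nat.card_prod, ih k k.2, ih (m - k) (by omega)]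

/-- The number of transfer systems on the linear order `Fin (n+1)` is the
Catalan number `catalan (n+1)`. -/
theorem card_transfer_systems (n : ℕ) :
    Nat.card (TransferSystem (Fin (n + 1))) = catalan (n + 1) := by
  rw [Nat.card_congr (transferSystemFinEquiv (n + 1)), card_isChainTransfer]
end

section
/- For natural numbers k ≤ n, the following identity holds: (n + k + 2) · ∑_{c} ∏_{i} catalan(cᵢ) = 2(k + 1) · C(2n+1, n−k), where the sum runs over all compositions c of n+1 having exactly k+1 blocks, and cᵢ ranges over the blocks of c. -/
open PowerSeries in
/-- The coefficients of the `k`-th power of a power series without constant term enumerate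
compositions with `k` blocks, weighted by the product of the coefficients at the blocks. -/
theorem PowerSeries.coeff_pow_eq_sum_composition {R : Type*} [CommSemiring R] (F : R⟦X⟧)
    (hF : constantCoeff F = 0) (k m : ℕ) :
    coeff m (F ^ k) = ∑ c ∈ Finset.univ.filter (fun c : Composition m => c.length = k),
      (c.blocks.map fun b => coeff b F).prod := by
  have hpow : F ^ k = ∏ _i : Fin k, F := by simp
  rw [hpow, coeff_prod]
  symm
  refine Finset.sum_bij_ne_zero
    (fun c _ _ => Finsupp.equivFunOnFinite.symm fun i : Fin k => c.blocks.getD i 0) ?_ ?_ ?_ ?_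
  · intro c hc _
    obtain rfl : c.length = k := by simpa using hc
    simp only [Finset.mem_finsuppAntidiag, Finset.subset_univ, and_true]
    simp
  · intro c hc _ d hd _ hcd
    have hcl : c.length = k := by simpa using hc
    have hdl : d.length = k := by simpa using hd
    ext1
    refine List.ext_getElem (by simp [hcl, hdl]) fun i hi hi' => ?_
    have := DFunLike.congr_fun hcd (⟨i, by simpa [hcl] using hi⟩ : Fin k)
    simpa [hi, hi'] using this
  · intro f hf hne
    have hpos : ∀ i, 0 < f i := fun i => Nat.pos_of_ne_zero fun h =>
      hne (Finset.prod_eq_zero (Finset.mem_univ i) (by simpa [h] using hF))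
    have hsum : ∑ i, f i = m := by simpa using hf
    refine ⟨⟨List.ofFn f, ?_, by rw [List.sum_ofFn, hsum]⟩, ?_, ?_, ?_⟩
    · intro b hb
      obtain ⟨i, rfl⟩ := List.mem_ofFn.1 hb
      exact hpos i
    · simp [Composition.length]
    · simpa [List.map_ofFn, List.prod_ofFn] using hne
    · ext i
      simp
  · intro c hc _
    obtain rfl : c.length = k := by simpa using hc
    conv_lhs => rw [← c.ofFn_blocksFun, List.map_ofFn, List.prod_ofFn]
    simp [Composition.blocksFun]

namespace PowerSeries

theorem catalanSeries_pow_succ (r : ℕ) :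
    catalanSeries ^ (r + 1) = catalanSeries ^ r + X * catalanSeries ^ (r + 2) := by
  rw [pow_succ]
  nth_rw 2 [← catalanSeries_sq_mul_X_add_one]
  ring

/-- The ballot-number formula for the coefficients of the powers of the Catalan series. -/
theorem coeff_catalanSeries_pow_add_choose (r j : ℕ) :
    coeff (j + 1) (catalanSeries ^ r) + (2 * j + r + 1).choose j =
      (2 * j + r + 1).choose (j + 1) := by
  induction j generalizing r with
  | zero =>
    induction r with
    | zero => simp [coeff_one]
    | succ r ih =>
      rw [catalanSeries_pow_succ, map_add, coeff_succ_X_mul]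
      simp at ih ⊢
      omega
  | succ j ihj =>
    induction r with
    | zero =>
      have h := Nat.choose_symm_half (j + 1)
      simp [coeff_one]
      exact h.symm
    | succ r ih =>
      have h := ihj (r + 2)
      rw [catalanSeries_pow_succ, map_add, coeff_succ_X_mul]
      have h₁ := Nat.choose_succ_succ (2 * (j + 1) + r + 1) j
      have h₂ := Nat.choose_succ_succ (2 * (j + 1) + r + 1) (j + 1)
      rw [show 2 * j + (r + 2) + 1 = 2 * (j + 1) + r + 1 by ring] at h
      rw [show 2 * (j + 1) + (r + 1) + 1 = 2 * (j + 1) + r + 1 + 1 by ring]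
      simp only [Nat.succ_eq_add_one] at h₁ h₂
      omega

end PowerSeries

open PowerSeries in
theorem sum_compositions_prod_catalan_eq_coeff (n k : ℕ) (hk : k ≤ n) :
    ∑ c ∈ Finset.univ.filter (fun c : Composition (n + 1) => c.length = k + 1),
      (c.blocks.map catalan).prod = coeff (n - k) (catalanSeries ^ (2 * (k + 1))) := by
  have h := coeff_pow_eq_sum_composition (X * catalanSeries ^ 2) (by simp) (k + 1) (n + 1)
  rw [mul_pow, ← pow_mul, show n + 1 = n - k + (k + 1) by omega, coeff_X_pow_mul] at h
  rw [h, ← show n + 1 = n - k + (k + 1) by omega]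
  refine Finset.sum_congr rfl fun c _ => congrArg List.prod (List.map_congr_left fun b hb => ?_)
  obtain ⟨b, rfl⟩ := Nat.exists_eq_succ_of_ne_zero (c.blocks_pos hb).ne'
  have hcoeff := congrArg (coeff (b + 1)) catalanSeries_sq_mul_X_add_one
  rw [mul_comm, map_add, coeff_one] at hcoeff
  simpa using hcoeff.symm


/-- For `k ≤ n`, `(n + k + 2)` times the sum, over all compositions of `n+1`
with exactly `k+1` blocks, of the products of the Catalan numbers of the
blocks, equals `2 * (k+1) * C(2n+1, n-k)`. -/
theorem sum_compositions_fixed_length_prod_catalan (n k : ℕ) (hk : k ≤ n) :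
    (n + k + 2) *
      ∑ c ∈ Finset.univ.filter (fun c : Composition (n + 1) => c.length = k + 1),
        (c.blocks.map catalan).prod =
      2 * (k + 1) * Nat.choose (2 * n + 1) (n - k) := by
  rw [sum_compositions_prod_catalan_eq_coeff n k hk]
  obtain ⟨j, rfl⟩ := Nat.exists_eq_add_of_le hk
  rw [Nat.add_sub_cancel_left]
  cases j with
  | zero => simp; ring
  | succ j =>
    have h := PowerSeries.coeff_catalanSeries_pow_add_choose (2 * (k + 1)) j
    have h₁ := Nat.choose_succ_right_eq (2 * (k + (j + 1)) + 1) j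
    rw [show 2 * j + 2 * (k + 1) + 1 = 2 * (k + (j + 1)) + 1 by ring] at h
    rw [show 2 * (k + (j + 1)) + 1 - j = 2 * k + j + 3 by omega] at h₁
    zify at h h₁ ⊢
    linear_combination (2 * k + j + 3 : ℤ) * h + h₁
end

section
/- For every n : ℕ, let N be the number of ordered pairs (R₁, R₂) of transfer systems on the linear order Fin (n+1) (with lattice operations min and max) such that R₁ is contained in R₂ (i.e., R₁ x y implies R₂ x y for all x, y). Then (n+1)(n+2) · N = 2 · C(4n+5, n). (Such pairs correspond bijectively to premodel structures on [n], so there are 2/((n+1)(n+2)) · C(4n+5, n) premodel structures on [n].) -/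
open PowerSeries in
theorem PowerSeries.exists_fixedPoint_of_contracting {A : Type*} [CommRing A] (Φ : A⟦X⟧ → A⟦X⟧)
    (hΦ : ∀ f g n, (X : A⟦X⟧) ^ n ∣ f - g → (X : A⟦X⟧) ^ (n + 1) ∣ Φ f - Φ g) :
    ∃ f, Φ f = f := by
  let s : ℕ → A⟦X⟧ := fun n => Φ^[n] 0
  have hs (n) : s (n + 1) = Φ (s n) := Function.iterate_succ_apply' Φ n 0
  have hstep (n) : (X : A⟦X⟧) ^ n ∣ s (n + 1) - s n := by
    induction n with
    | zero => simp
    | succ n ih => rw [hs (n + 1), hs n]; exact hΦ _ _ _ (by rwa [← hs n])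
  have hcoeff (i k) : coeff i (s (i + 1 + k)) = coeff i (s (i + 1)) := by
    induction k with
    | zero => rfl
    | succ k ih =>
      rw [← ih, ← sub_eq_zero, ← map_sub]
      exact X_pow_dvd_iff.1 (hstep (i + 1 + k)) i (by omega)
  let f : A⟦X⟧ := PowerSeries.mk fun i => coeff i (s (i + 1))
  have hf (n) : (X : A⟦X⟧) ^ n ∣ f - s n := by
    refine X_pow_dvd_iff.2 fun i hi => ?_
    obtain ⟨k, rfl⟩ := Nat.exists_eq_add_of_le (Nat.succ_le_of_lt hi)
    rw [map_sub, sub_eq_zero, coeff_mk]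
    exact (hcoeff i k).symm
  refine ⟨f, PowerSeries.ext fun n => ?_⟩
  have h₁ := X_pow_dvd_iff.1 (hΦ _ _ _ (hf n)) n n.lt_succ_self
  have h₂ := X_pow_dvd_iff.1 (hf (n + 1)) n n.lt_succ_self
  rw [hs n, map_sub, sub_eq_zero] at h₂
  rw [map_sub, sub_eq_zero] at h₁
  rw [h₁, h₂]

open PowerSeries in
theorem exists_quaternary_series : ∃ B : ℤ⟦X⟧, B = 1 + X * B ^ 4 := by
  obtain ⟨B, hB⟩ := exists_fixedPoint_of_contracting (A := ℤ) (fun f => 1 + X * f ^ 4) (by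
    intro f g n h
    have : (1 + X * f ^ 4) - (1 + X * g ^ 4) = X * (f ^ 4 - g ^ 4) := by ring
    rw [this, pow_succ']
    exact mul_dvd_mul_left _ (h.trans (sub_dvd_pow_sub_pow _ _ _)))
  exact ⟨B, hB.symm⟩

open PowerSeries in
theorem succ_mul_coeff_succ_pow_of_quaternary {B : ℤ⟦X⟧} (hB : B = 1 + X * B ^ 4) (n r : ℕ) :
    ((n : ℤ) + 1) * coeff (n + 1) (B ^ r) = r * (4 * n + r + 3).choose n := by
  have hrec (n r : ℕ) : coeff (n + 1) (B ^ (r + 1)) =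
      coeff (n + 1) (B ^ r) + coeff n (B ^ (r + 4)) := by
    have : B ^ (r + 1) = B ^ r + X * B ^ (r + 4) := by
      rw [pow_succ]; nth_rw 2 [hB]; ring
    rw [this, map_add, coeff_succ_X_mul]
  have h0 : constantCoeff B = 1 := by
    rw [hB]; simp
  induction n generalizing r with
  | zero =>
    induction r with
    | zero => simp [coeff_one]
    | succ r ih =>
      rw [hrec, mul_add, ih]; simp [h0]
  | succ n ihn =>
    induction r with
    | zero => simp [coeff_one]
    | succ r ih =>
      rw [hrec, mul_add, ih]
      have h := ihn (r + 4)
      have hne : ((n : ℤ) + 1) ≠ 0 := by positivity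
      apply mul_left_cancel₀ hne
      have e2 := Nat.choose_succ_right_eq (4 * n + r + 7) n
      have e3 := Nat.choose_succ_succ (4 * n + r + 7) n
      rw [show 4 * n + r + 7 - n = 3 * n + r + 7 by omega] at e2
      rw [show 4 * n + (r + 4) + 3 = 4 * n + r + 7 by ring] at h
      rw [show 4 * (n + 1) + r + 3 = 4 * n + r + 7 by ring,
        show 4 * (n + 1) + (r + 1) + 3 = 4 * n + r + 7 + 1 by ring, e3]
      generalize (4 * n + r + 7).choose n = a at *
      generalize (4 * n + r + 7).choose (n + 1) = b at *
      generalize coeff (n + 1) (B ^ (r + 4)) = c at *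
      have e2' : (b : ℤ) * (n + 1) = a * (3 * n + r + 7) := by exact_mod_cast e2
      push_cast at h ⊢
      linear_combination (n + 2 : ℤ) * h - e2'

open PowerSeries in
theorem mul_coeff_of_quaternary {B : ℤ⟦X⟧} (hB : B = 1 + X * B ^ 4) (n : ℕ) :
    ((n : ℤ) + 1) * (n + 2) * coeff (n + 1) (2 * B ^ 2 - B ^ 3) = 2 * (4 * n + 5).choose n := by
  have h2 := succ_mul_coeff_succ_pow_of_quaternary hB n 2
  have h3 := succ_mul_coeff_succ_pow_of_quaternary hB n 3
  have e := Nat.choose_mul_succ_eq (4 * n + 5) n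
  rw [show 4 * n + 5 + 1 - n = 3 * n + 6 by omega] at e
  have e' : ((4 * n + 5).choose n : ℤ) * (4 * n + 6) = (4 * n + 6).choose n * (3 * n + 6) := by
    exact_mod_cast e
  rw [two_mul, map_sub, map_add]
  push_cast at h2 h3
  linear_combination 2 * (n + 2 : ℤ) * h2 - (n + 2 : ℤ) * h3 + e'

section CatalyticEquation

open PowerSeries

/-- The specialization at `1` of the polynomial coefficients of a power series. -/
noncomputable def specializeOne : (Polynomial ℤ)⟦X⟧ →+* ℤ⟦X⟧ :=
  PowerSeries.map (Polynomial.evalRingHom 1)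

/-- The equation with catalytic variable `x` satisfied by the series of nested pairs. -/
def CatalyticEquation (F : (Polynomial ℤ)⟦X⟧) : Prop :=
  (C Polynomial.X - 1) * F = (C Polynomial.X - 1) * C Polynomial.X +
    C Polynomial.X * (X * ((F - PowerSeries.map Polynomial.C (specializeOne F)) * F))

theorem CatalyticEquation.unique {F G : (Polynomial ℤ)⟦X⟧} (hF : CatalyticEquation F)
    (hG : CatalyticEquation G) : F = G := by
  have hreg : (Polynomial.X - 1 : Polynomial ℤ) ≠ 0 := by
    simpa using Polynomial.X_sub_C_ne_zero (1 : ℤ)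
  have hC : (C Polynomial.X - 1 : (Polynomial ℤ)⟦X⟧) = C (Polynomial.X - 1) := by simp
  unfold CatalyticEquation at hF hG
  rw [hC] at hF hG
  ext1 n
  induction n using Nat.strong_induction_on with
  | _ n ih =>
    have hFn := congrArg (coeff n) hF
    have hGn := congrArg (coeff n) hG
    rw [coeff_C_mul, map_add, coeff_C_mul n (X * _) Polynomial.X] at hFn hGn
    refine mul_left_cancel₀ hreg (hFn.trans (Eq.trans ?_ hGn.symm))
    refine congrArg (_ + Polynomial.X * ·) ?_
    cases n with
    | zero => rw [coeff_zero_X_mul, coeff_zero_X_mul]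
    | succ n =>
      rw [coeff_succ_X_mul, coeff_succ_X_mul, coeff_mul, coeff_mul]
      refine Finset.sum_congr rfl fun p hp => ?_
      have hp := Finset.HasAntidiagonal.mem_antidiagonal.1 hp
      simp only [map_sub, specializeOne, coeff_map]
      rw [ih p.1 (by omega), ih p.2 (by omega)]

theorem exists_catalyticEquation {B : ℤ⟦X⟧} (hB : B = 1 + X * B ^ 4) :
    ∃ F, CatalyticEquation F ∧ specializeOne F = 2 * B ^ 2 - B ^ 3 := by
  let Z : ℤ⟦X⟧ := X * B ^ 3
  let ι : ℤ⟦X⟧ →+* (Polynomial ℤ)⟦X⟧ := PowerSeries.map Polynomial.C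
  have hι (f) : specializeOne (ι f) = f := by
    ext n; simp [ι, specializeOne]
  have hιX : ι X = X := map_X _
  have hBZ : B * (1 - Z) = 1 := by
    simp only [Z]; linear_combination hB
  obtain ⟨W, hW⟩ := exists_fixedPoint_of_contracting
    (fun f => 1 - ι Z + C Polynomial.X * ι Z * f ^ 2) (by
    intro f g n h
    have : (1 - ι Z + C Polynomial.X * ι Z * f ^ 2) - (1 - ι Z + C Polynomial.X * ι Z * g ^ 2) =
        X * ((C Polynomial.X * ι B ^ 3) * (f ^ 2 - g ^ 2)) := by
      simp only [Z, map_mul, map_pow, hιX]; ring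
    rw [this, pow_succ']
    exact mul_dvd_mul_left _ (dvd_mul_of_dvd_right (h.trans (sub_dvd_pow_sub_pow _ _ _)) _))
  have hx : specializeOne (C Polynomial.X) = 1 := by simp [specializeOne]
  have hW1 : specializeOne W = 1 := by
    have h := congrArg specializeOne hW
    simp only [map_add, map_sub, map_mul, map_pow, map_one, hι, hx] at h
    have h' : (specializeOne W - 1) * (1 - Z * (specializeOne W + 1)) = 0 := by
      linear_combination -h
    rcases mul_eq_zero.1 h' with h' | h'
    · exact sub_eq_zero.1 h'
    · have := congrArg (constantCoeff (R := ℤ)) h'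
      simp [Z] at this
  let F := C Polynomial.X * W * ι B ^ 3 * (1 - ι Z - ι Z * W)
  have hF1 : specializeOne F = 2 * B ^ 2 - B ^ 3 := by
    simp only [F, map_sub, map_mul, map_pow, map_one, hι, hx, hW1]
    linear_combination 2 * B ^ 2 * hBZ
  refine ⟨F, ?_, hF1⟩
  unfold CatalyticEquation
  have hF1' : PowerSeries.map Polynomial.C (specializeOne F) = ι B ^ 3 * (1 - 2 * ι Z) := by
    have : 2 * B ^ 2 - B ^ 3 = B ^ 3 * (1 - 2 * Z) := by linear_combination -2 * B ^ 2 * hBZ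
    rw [hF1, this]
    change ι _ = _
    rw [map_mul, map_pow, map_sub, map_mul, map_one, map_ofNat]
  rw [hF1']
  have hb : ι B ^ 3 * (1 - ι Z) ^ 3 = 1 := by
    rw [← mul_pow, ← map_one ι, ← map_sub, ← map_mul, hBZ, map_one, one_pow]
  have ht : X * ι B ^ 3 = ι Z := by simp [Z, hιX]
  simp only [F]
  generalize ι B ^ 3 = b at *
  generalize ι Z = z at *
  generalize (C Polynomial.X : (Polynomial ℤ)⟦X⟧) = x at *
  linear_combination (-b) * (x ^ 2 * W ^ 2 * z ^ 2 + 2 * x ^ 2 * W * z ^ 2 - 2 * x ^ 2 * W * z +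
    x ^ 2 * z ^ 2 - 2 * x ^ 2 * z + x ^ 2 + x * W * z - x * z ^ 2 + 2 * x * z - x) * hW + (x - 1) * x * hb
    - x * (x * W * b * (1 - z - z * W) - b * (1 - 2 * z)) * x * W * (1 - z - z * W) * ht

theorem CatalyticEquation.mul_coeff_specializeOne {F : (Polynomial ℤ)⟦X⟧}
    (hF : CatalyticEquation F) (n : ℕ) :
    ((n : ℤ) + 1) * (n + 2) * coeff (n + 1) (specializeOne F) = 2 * (4 * n + 5).choose n := by
  obtain ⟨B, hB⟩ := exists_quaternary_series
  obtain ⟨G, hG, hG1⟩ := exists_catalyticEquation hB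
  rw [hF.unique hG, hG1, mul_coeff_of_quaternary hB]

end CatalyticEquation

/-- The first `v` entries of `l` exist, and none of the arcs from `i` to `i + l[i]` with `i < v`
leaves the interval `[0, v)`. -/
def ClosedPrefix : ℕ → List ℕ → Prop
  | 0, _ => True
  | _ + 1, [] => False
  | v + 1, a :: l => a ≤ v ∧ ClosedPrefix v l

/-- Lists of arc lengths whose arcs are noncrossing: the bracket vectors of the Tamari lattice. -/
def BracketList : List ℕ → Prop
  | [] => True
  | a :: l => ClosedPrefix a l ∧ BracketList l

theorem closedPrefix_iff (v : ℕ) (l : List ℕ) :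
    ClosedPrefix v l ↔ v ≤ l.length ∧ ∀ i < v, i + l.getD i 0 < v := by
  induction l generalizing v with
  | nil => cases v <;> simp [ClosedPrefix]
  | cons a l ih =>
    cases v with
    | zero => simp [ClosedPrefix]
    | succ v =>
      rw [ClosedPrefix, ih]
      constructor
      · rintro ⟨ha, hv, h⟩
        refine ⟨by simpa using hv, fun i hi => ?_⟩
        cases i with
        | zero => simpa using Nat.lt_succ_of_le ha
        | succ i => have := h i (by omega); simp only [List.getD_cons_succ]; omega
      · rintro ⟨hv, h⟩
        refine ⟨by simpa [Nat.lt_succ_iff] using h 0 (by omega), by simpa using hv, fun i hi => ?_⟩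
        have := h (i + 1) (by omega)
        simp only [List.getD_cons_succ] at this
        omega

theorem ClosedPrefix.le_length {v : ℕ} {l : List ℕ} (h : ClosedPrefix v l) : v ≤ l.length :=
  ((closedPrefix_iff v l).1 h).1

theorem closedPrefix_append_of_le {v : ℕ} {l₁ : List ℕ} (l₂ : List ℕ) (hv : v ≤ l₁.length) :
    ClosedPrefix v (l₁ ++ l₂) ↔ ClosedPrefix v l₁ := by
  induction l₁ generalizing v with
  | nil =>
    obtain rfl : v = 0 := by simpa using hv
    simp [ClosedPrefix]
  | cons a l₁ ih =>
    cases v with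
    | zero => simp [ClosedPrefix]
    | succ v => simp [ClosedPrefix, ih (Nat.le_of_succ_le_succ hv)]

theorem closedPrefix_length_add {v : ℕ} {l₁ : List ℕ} (l₂ : List ℕ)
    (h₁ : ClosedPrefix l₁.length l₁) :
    ClosedPrefix (l₁.length + v) (l₁ ++ l₂) ↔ ClosedPrefix v l₂ := by
  induction l₁ with
  | nil => simp
  | cons a l₁ ih =>
    obtain ⟨ha, h₁⟩ := h₁
    rw [List.length_cons, Nat.add_right_comm, List.cons_append, ClosedPrefix, ih h₁]
    exact and_iff_right (by omega)

theorem BracketList.closedPrefix_length {l : List ℕ} (h : BracketList l) :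
    ClosedPrefix l.length l := by
  induction l with
  | nil => trivial
  | cons a l ih => exact ⟨h.1.le_length, ih h.2⟩

theorem bracketList_append {l₁ l₂ : List ℕ} (h : ClosedPrefix l₁.length l₁) :
    BracketList (l₁ ++ l₂) ↔ BracketList l₁ ∧ BracketList l₂ := by
  induction l₁ with
  | nil => simp [BracketList]
  | cons a l₁ ih =>
    rw [List.cons_append, BracketList, BracketList, ih h.2, closedPrefix_append_of_le _ h.1,
      and_assoc]

theorem bracketList_iff (l : List ℕ) :
    BracketList l ↔ ∀ i < l.length, i + l.getD i 0 < l.length ∧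
      ∀ j, i ≤ j → j ≤ i + l.getD i 0 → j + l.getD j 0 ≤ i + l.getD i 0 := by
  induction l with
  | nil => simp [BracketList]
  | cons a l ih =>
    rw [BracketList, ih, closedPrefix_iff]
    constructor
    · rintro ⟨⟨ha, hc⟩, h⟩ i hi
      cases i with
      | zero =>
        refine ⟨by simp; omega, fun j _ hj => ?_⟩
        cases j with
        | zero => simp
        | succ j =>
          simp only [List.getD_cons_zero, List.getD_cons_succ] at hj ⊢
          have := hc j (by omega)
          omega
      | succ i =>
        obtain ⟨h₁, h₂⟩ := h i (by simpa using hi)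
        simp only [List.getD_cons_succ, List.length_cons]
        refine ⟨by omega, fun j hij hj => ?_⟩
        cases j with
        | zero => omega
        | succ j => have := h₂ j (by omega) (by omega); simp only [List.getD_cons_succ]; omega
    · intro h
      refine ⟨⟨?_, fun i hi => ?_⟩, fun i hi => ⟨?_, fun j hij hj => ?_⟩⟩
      · have := (h 0 (by simp)).1
        simp at this
        omega
      · have := (h 0 (by simp)).2 (i + 1) (by omega) (by simp; omega)
        simp only [List.getD_cons_zero, List.getD_cons_succ] at this
        omega
      · have := (h (i + 1) (by simpa using hi)).1
        simp only [List.getD_cons_succ, List.length_cons] at this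
        omega
      · have := (h (i + 1) (by simpa using hi)).2 (j + 1) (by omega)
          (by simp only [List.getD_cons_succ]; omega)
        simp only [List.getD_cons_succ] at this
        omega

/-- The transfer system on a chain whose relations lie below the arcs of a bracket list. -/
def BracketList.transferSystem {m : ℕ} {l : List ℕ} (hl : l.length = m) (h : BracketList l) :
    TransferSystem (Fin m) where
  rel x y := x ≤ y ∧ (y : ℕ) ≤ x + l.getD x 0
  le_of_rel _ _ h := h.1
  refl _ := ⟨le_rfl, Nat.le_add_right _ _⟩
  trans x y z hxy hyz := ⟨hxy.1.trans hyz.1,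
    hyz.2.trans (((bracketList_iff l).1 h x (hl ▸ x.2)).2 y hxy.1 hxy.2)⟩
  restrict x y z hxy hzy := by
    refine ⟨inf_le_right, ?_⟩
    rcases le_total x z with hxz | hzx
    · rw [inf_eq_left.2 hxz]
      exact le_trans hzy hxy.2
    · rw [inf_eq_right.2 hzx]
      exact Nat.le_add_right _ _

theorem BracketList.getD_le_of_transferSystem_le {m : ℕ} {l l' : List ℕ} (hl : l.length = m)
    (h : BracketList l) (hl' : l'.length = m) (h' : BracketList l')
    (hle : ∀ x y, (h.transferSystem hl).rel x y → (h'.transferSystem hl').rel x y) (i : ℕ)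
    (hi : i < m) : l.getD i 0 ≤ l'.getD i 0 := by
  have hlt := ((bracketList_iff l).1 h i (hl ▸ hi)).1
  have := (hle ⟨i, hi⟩ ⟨i + l.getD i 0, hl ▸ hlt⟩
    ⟨Fin.mk_le_mk.2 (Nat.le_add_right _ _), le_rfl⟩).2
  simpa using this

theorem BracketList.eq_of_transferSystem_eq {m : ℕ} {l l' : List ℕ} (hl : l.length = m)
    (h : BracketList l) (hl' : l'.length = m) (h' : BracketList l')
    (heq : h.transferSystem hl = h'.transferSystem hl') : l = l' := by
  refine List.ext_getElem (hl.trans hl'.symm) fun i hi hi' => ?_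
  rw [← List.getD_eq_getElem l 0 hi, ← List.getD_eq_getElem l' 0 hi']
  exact le_antisymm
    (getD_le_of_transferSystem_le hl h hl' h' (fun _ _ hxy => heq ▸ hxy) i (hl ▸ hi))
    (getD_le_of_transferSystem_le hl' h' hl h (fun _ _ hxy => heq ▸ hxy) i (hl ▸ hi))

theorem TransferSystem.rel_of_le_of_le {m : ℕ} (R : TransferSystem (Fin m)) {x y z : Fin m}
    (hxy : R.rel x y) (hxz : x ≤ z) (hzy : z ≤ y) : R.rel x z := by
  simpa [inf_eq_left.2 hxz] using R.restrict x y z hxy hzy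

theorem TransferSystem.exists_bracketList {m : ℕ} (R : TransferSystem (Fin m)) :
    ∃ (l : List ℕ) (hl : l.length = m) (h : BracketList l), h.transferSystem hl = R := by
  classical
  have hmax (x : Fin m) : ∃ y, R.rel x y ∧ ∀ z, R.rel x z → z ≤ y := by
    obtain ⟨y, hy, hmax⟩ := (Finset.univ.filter (R.rel x)).exists_max_image id
      ⟨x, by simpa using R.refl x⟩
    exact ⟨y, by simpa using hy, fun z hz => hmax z (by simpa using hz)⟩
  choose u hu humax using hmax
  obtain ⟨l, hl, hget⟩ : ∃ l : List ℕ, l.length = m ∧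
      ∀ x : Fin m, (x : ℕ) + l.getD x 0 = u x := by
    refine ⟨List.ofFn fun x : Fin m => (u x : ℕ) - x, List.length_ofFn, fun x => ?_⟩
    have : (x : ℕ) ≤ u x := R.le_of_rel _ _ (hu x)
    rw [List.getD_eq_getElem _ 0 (by simp)]
    simp only [List.getElem_ofFn, Fin.eta]
    omega
  have h : BracketList l := by
    refine (bracketList_iff l).2 fun i hi => ?_
    have hi' : i < m := hl ▸ hi
    rw [hl, hget ⟨i, hi'⟩]
    refine ⟨(u _).2, fun j hij hj => ?_⟩
    have hj' : j < m := hj.trans_lt (u _).2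
    rw [hget ⟨j, hj'⟩]
    exact humax _ _ (R.trans _ _ _ (R.rel_of_le_of_le (z := ⟨j, hj'⟩) (hu _) hij hj) (hu _))
  refine ⟨l, hl, h, ?_⟩
  have hrel : (h.transferSystem hl).rel = R.rel := by
    funext x y
    change (x ≤ y ∧ (y : ℕ) ≤ x + l.getD x 0) = R.rel x y
    rw [hget]
    exact propext ⟨fun hy => R.rel_of_le_of_le (hu x) hy.1 hy.2,
      fun hy => ⟨R.le_of_rel _ _ hy, humax _ _ hy⟩⟩
  cases R
  simpa [BracketList.transferSystem] using hrel

/-- Lists of pairs of arc lengths describing two nested transfer systems on a chain. -/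
def NestedList (l : List (ℕ × ℕ)) : Prop :=
  BracketList (l.map Prod.fst) ∧ BracketList (l.map Prod.snd) ∧ ∀ a ∈ l, a.1 ≤ a.2

open Classical in
/-- The nested lists of length `m`. -/
noncomputable def nestedLists : ℕ → Finset (List (ℕ × ℕ))
  | 0 => {[]}
  | m + 1 => (((Finset.range (m + 1) ×ˢ Finset.range (m + 1)) ×ˢ nestedLists m).image
      fun p => p.1 :: p.2).filter NestedList

theorem nestedList_cons (a : ℕ × ℕ) (l : List (ℕ × ℕ)) :
    NestedList (a :: l) ↔ ClosedPrefix a.1 (l.map Prod.fst) ∧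
      ClosedPrefix a.2 (l.map Prod.snd) ∧ a.1 ≤ a.2 ∧ NestedList l := by
  simp only [NestedList, List.map_cons, BracketList, List.forall_mem_cons]
  tauto

theorem mem_nestedLists {m : ℕ} {l : List (ℕ × ℕ)} :
    l ∈ nestedLists m ↔ l.length = m ∧ NestedList l := by
  induction m generalizing l with
  | zero =>
    simp only [nestedLists, Finset.mem_singleton, List.length_eq_zero_iff, iff_self_and]
    rintro rfl
    simp [NestedList, BracketList]
  | succ m ih =>
    simp only [nestedLists, Finset.mem_filter, Finset.mem_image, Finset.mem_product,
      Finset.mem_range, ih]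
    refine and_congr_left fun hl => ?_
    constructor
    · rintro ⟨⟨a, l⟩, ⟨-, rfl, -⟩, rfl⟩
      rfl
    · intro h
      obtain ⟨a, l, rfl⟩ := List.exists_cons_of_length_eq_add_one h
      have h' := (nestedList_cons a l).1 hl
      have h₁ := h'.1.le_length
      have h₂ := h'.2.1.le_length
      simp only [List.length_map, List.length_cons] at h₁ h₂ h
      exact ⟨(a, l), ⟨⟨Nat.lt_succ_of_le (h₁.trans_eq (Nat.succ_injective h)),
        Nat.lt_succ_of_le (h₂.trans_eq (Nat.succ_injective h))⟩, Nat.succ_injective h, h'.2.2.2⟩, rfl⟩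

theorem card_nested_transferSystem (m : ℕ) :
    Nat.card {p : TransferSystem (Fin m) × TransferSystem (Fin m) //
      ∀ x y, p.1.rel x y → p.2.rel x y} = (nestedLists m).card := by
  rw [← Nat.card_eq_finsetCard]
  symm
  have hlen {l : List (ℕ × ℕ)} (hl : l ∈ nestedLists m) : l.length = m := (mem_nestedLists.1 hl).1
  have hnest {l : List (ℕ × ℕ)} (hl : l ∈ nestedLists m) : NestedList l := (mem_nestedLists.1 hl).2
  refine Nat.card_congr (Equiv.ofBijective
    (fun l => ⟨((hnest l.2).1.transferSystem (by simpa using hlen l.2),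
      (hnest l.2).2.1.transferSystem (by simpa using hlen l.2)), ?_⟩) ⟨?_, ?_⟩)
  · rintro x y ⟨hxy, hy⟩
    refine ⟨hxy, hy.trans (Nat.add_le_add_left ?_ _)⟩
    have hx : (x : ℕ) < l.1.length := (hlen l.2).symm ▸ x.2
    rw [List.getD_eq_getElem _ 0 (by simpa using hx), List.getD_eq_getElem _ 0 (by simpa using hx)]
    simpa using (hnest l.2).2.2 _ (List.getElem_mem hx)
  · rintro ⟨l, hl⟩ ⟨l', hl'⟩ heq
    simp only [Subtype.mk.injEq, Prod.mk.injEq] at heq ⊢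
    have h₁ := BracketList.eq_of_transferSystem_eq _ _ _ _ heq.1
    have h₂ := BracketList.eq_of_transferSystem_eq _ _ _ _ heq.2
    rw [← List.zip_unzip l, ← List.zip_unzip l', List.unzip_eq_map, List.unzip_eq_map, h₁, h₂]
  · rintro ⟨⟨R₁, R₂⟩, hR⟩
    obtain ⟨l₁, hl₁, hb₁, rfl⟩ := R₁.exists_bracketList
    obtain ⟨l₂, hl₂, hb₂, rfl⟩ := R₂.exists_bracketList
    have hfst : (l₁.zip l₂).map Prod.fst = l₁ := List.map_fst_zip (by omega)
    have hsnd : (l₁.zip l₂).map Prod.snd = l₂ := List.map_snd_zip (by omega)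
    have hmem : l₁.zip l₂ ∈ nestedLists m := by
      refine mem_nestedLists.2 ⟨by simp [hl₁, hl₂], by rwa [hfst], by rwa [hsnd], ?_⟩
      intro a ha
      obtain ⟨i, hi, rfl⟩ := List.getElem_of_mem ha
      have hi₁ : i < m := by simp at hi; omega
      have := BracketList.getD_le_of_transferSystem_le hl₁ hb₁ hl₂ hb₂ hR i hi₁
      rw [List.getD_eq_getElem _ 0 (hl₁ ▸ hi₁), List.getD_eq_getElem _ 0 (hl₂ ▸ hi₁)] at this
      simpa using this
    refine ⟨⟨_, hmem⟩, ?_⟩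
    simp [hfst, hsnd]

open Classical in
/-- The lengths of the closed prefixes of `l`. -/
noncomputable def contacts (l : List ℕ) : Finset ℕ :=
  (Finset.range (l.length + 1)).filter (ClosedPrefix · l)

theorem mem_contacts {v : ℕ} {l : List ℕ} : v ∈ contacts l ↔ ClosedPrefix v l := by
  simp only [contacts, Finset.mem_filter, Finset.mem_range, and_iff_right_iff_imp]
  exact fun h => Nat.lt_succ_of_le h.le_length

theorem contacts_cons (a : ℕ) (l : List ℕ) :
    contacts (a :: l) = insert 0 (((contacts l).filter (a ≤ ·)).image Nat.succ) := by
  ext v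
  cases v <;> simp [mem_contacts, ClosedPrefix, and_comm]

theorem card_contacts_cons (a : ℕ) (l : List ℕ) :
    (contacts (a :: l)).card = ((contacts l).filter (a ≤ ·)).card + 1 := by
  rw [contacts_cons, Finset.card_insert_of_notMem (by simp),
    Finset.card_image_of_injective _ Nat.succ_injective]

theorem card_contacts_append {l₁ : List ℕ} (l₂ : List ℕ) {a : ℕ} (ha : a ≤ l₁.length)
    (h₁ : ClosedPrefix l₁.length l₁) :
    ((contacts (l₁ ++ l₂)).filter (a ≤ ·)).card + 1 =
      ((contacts l₁).filter (a ≤ ·)).card + (contacts l₂).card := by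
  have hunion : (contacts (l₁ ++ l₂)).filter (a ≤ ·) =
      (contacts l₁).filter (a ≤ ·) ∪ (contacts l₂).image (l₁.length + ·) := by
    ext v
    simp only [Finset.mem_filter, Finset.mem_union, Finset.mem_image, mem_contacts]
    constructor
    · rintro ⟨hv, hav⟩
      rcases le_total v l₁.length with hle | hle
      · exact Or.inl ⟨(closedPrefix_append_of_le l₂ hle).1 hv, hav⟩
      · obtain ⟨k, rfl⟩ := Nat.exists_eq_add_of_le hle
        exact Or.inr ⟨k, (closedPrefix_length_add l₂ h₁).1 hv, rfl⟩
    · rintro (⟨hv, hav⟩ | ⟨k, hk, rfl⟩)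
      · exact ⟨(closedPrefix_append_of_le l₂ hv.le_length).2 hv, hav⟩
      · exact ⟨(closedPrefix_length_add l₂ h₁).2 hk, ha.trans (Nat.le_add_right _ _)⟩
  have hinter : (contacts l₁).filter (a ≤ ·) ∩ (contacts l₂).image (l₁.length + ·) =
      {l₁.length} := by
    ext v
    simp only [Finset.mem_filter, Finset.mem_inter, Finset.mem_image, mem_contacts,
      Finset.mem_singleton]
    constructor
    · rintro ⟨⟨hv, -⟩, k, -, rfl⟩
      have := hv.le_length
      omega
    · rintro rfl
      exact ⟨⟨h₁, ha⟩, 0, trivial, rfl⟩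
  rw [hunion, ← Finset.card_singleton l₁.length, ← hinter, Finset.card_union_add_card_inter,
    Finset.card_image_of_injective _ (add_right_injective _)]

theorem sub_one_mul_sum_pow_card_filter_le {A : Type*} [CommRing A] (x : A) (s : Finset ℕ) :
    (x - 1) * ∑ a ∈ s, x ^ (s.filter (a ≤ ·)).card = x * (x ^ s.card - 1) := by
  induction s using Finset.induction_on_min with
  | empty => simp
  | insert a s has ih =>
    have ha : a ∉ s := fun h => (has a h).false
    have hfa : (insert a s).filter (a ≤ ·) = insert a s :=
      Finset.filter_true_of_mem fun b hb => (Finset.mem_insert.1 hb).elim (·.ge) (has b · |>.le)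
    have hfs : ∑ b ∈ s, x ^ ((insert a s).filter (b ≤ ·)).card =
        ∑ b ∈ s, x ^ (s.filter (b ≤ ·)).card :=
      Finset.sum_congr rfl fun b hb => by
        rw [Finset.filter_insert, if_neg (has b hb).not_ge]
    rw [Finset.sum_insert ha, hfa, hfs, mul_add, ih, Finset.card_insert_of_notMem ha]
    ring

theorem NestedList.closedPrefix_fst_of_snd {l : List (ℕ × ℕ)} (h : NestedList l) {v : ℕ}
    (hv : ClosedPrefix v (l.map Prod.snd)) : ClosedPrefix v (l.map Prod.fst) := by
  induction l generalizing v with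
  | nil => exact hv
  | cons a l ih =>
    cases v with
    | zero => trivial
    | succ v =>
      have h' := (nestedList_cons a l).1 h
      exact ⟨h'.2.2.1.trans hv.1, ih h'.2.2.2 hv.2⟩

theorem nestedList_append {l₁ l₂ : List (ℕ × ℕ)}
    (h₁ : ClosedPrefix l₁.length (l₁.map Prod.fst))
    (h₂ : ClosedPrefix l₁.length (l₁.map Prod.snd)) :
    NestedList (l₁ ++ l₂) ↔ NestedList l₁ ∧ NestedList l₂ := by
  rw [NestedList, List.map_append, List.map_append, bracketList_append (by simpa using h₁),
    bracketList_append (by simpa using h₂), List.forall_mem_append]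
  simp only [NestedList]
  tauto

theorem NestedList.closedPrefix_length_fst {l : List (ℕ × ℕ)} (h : NestedList l) :
    ClosedPrefix l.length (l.map Prod.fst) := by
  simpa using h.1.closedPrefix_length

theorem NestedList.closedPrefix_length_snd {l : List (ℕ × ℕ)} (h : NestedList l) :
    ClosedPrefix l.length (l.map Prod.snd) := by
  simpa using h.2.1.closedPrefix_length

theorem nestedList_cons_append {l₁ l₂ : List (ℕ × ℕ)} {v : ℕ} :
    NestedList ((v, l₁.length) :: (l₁ ++ l₂)) ↔
      NestedList l₁ ∧ NestedList l₂ ∧ v ∈ contacts (l₁.map Prod.fst) := by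
  rw [nestedList_cons, mem_contacts]
  simp only [List.map_append]
  constructor
  · rintro ⟨hv, hw, hvw, h⟩
    have h₁ := h.closedPrefix_fst_of_snd (v := l₁.length) (by simpa using hw)
    rw [closedPrefix_append_of_le _ (by simpa using hvw)] at hv
    rw [List.map_append, closedPrefix_append_of_le _ (by simp)] at h₁
    rw [closedPrefix_append_of_le _ (by simp)] at hw
    exact ⟨((nestedList_append h₁ hw).1 h).1, ((nestedList_append h₁ hw).1 h).2, hv⟩
  · rintro ⟨h₁, h₂, hv⟩
    have hvw : v ≤ l₁.length := by simpa using hv.le_length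
    exact ⟨(closedPrefix_append_of_le _ hv.le_length).2 hv,
      (closedPrefix_append_of_le _ (by simp)).2 h₁.closedPrefix_length_snd, hvw,
      (nestedList_append h₁.closedPrefix_length_fst h₁.closedPrefix_length_snd).2 ⟨h₁, h₂⟩⟩

theorem sum_nestedLists_succ {A : Type*} [AddCommMonoid A] (f : List (ℕ × ℕ) → A) (m : ℕ) :
    ∑ l ∈ nestedLists (m + 1), f l =
      ∑ p ∈ Finset.HasAntidiagonal.antidiagonal m, ∑ l₁ ∈ nestedLists p.1, ∑ l₂ ∈ nestedLists p.2,
        ∑ v ∈ contacts (l₁.map Prod.fst), f ((v, p.1) :: (l₁ ++ l₂)) := by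
  simp only [Finset.sum_sigma']
  symm
  refine Finset.sum_bij (fun q _ => (q.2.2.2, q.1.1) :: (q.2.1 ++ q.2.2.1)) ?_ ?_ ?_
    (fun _ _ => rfl)
  · rintro ⟨⟨w, r⟩, l₁, l₂, v⟩ h
    simp only [Finset.mem_sigma, Finset.HasAntidiagonal.mem_antidiagonal, mem_nestedLists] at h ⊢
    obtain ⟨hm, ⟨rfl, h₁⟩, ⟨rfl, h₂⟩, hv⟩ := h
    exact ⟨by simpa using hm, nestedList_cons_append.2 ⟨h₁, h₂, hv⟩⟩
  · rintro ⟨⟨w, r⟩, l₁, l₂, v⟩ h ⟨⟨w', r'⟩, l₁', l₂', v'⟩ h' heq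
    simp only [Finset.mem_sigma, Finset.HasAntidiagonal.mem_antidiagonal, mem_nestedLists] at h h'
    obtain ⟨-, ⟨rfl, -⟩, ⟨rfl, -⟩, -⟩ := h
    obtain ⟨-, ⟨rfl, -⟩, ⟨rfl, -⟩, -⟩ := h'
    simp only [List.cons.injEq, Prod.mk.injEq] at heq
    obtain ⟨⟨rfl, hlen⟩, happ⟩ := heq
    obtain ⟨rfl, rfl⟩ := List.append_inj happ hlen
    rfl
  · intro l hl
    obtain ⟨hlen, hl⟩ := mem_nestedLists.1 hl
    obtain ⟨⟨v, w⟩, l, rfl⟩ := List.exists_cons_of_length_eq_add_one hlen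
    have hw : w ≤ l.length := by simpa using ((nestedList_cons _ _).1 hl).2.1.le_length
    obtain ⟨l₁, l₂, rfl, rfl⟩ : ∃ l₁ l₂, l = l₁ ++ l₂ ∧ w = l₁.length :=
      ⟨l.take w, l.drop w, (List.take_append_drop w l).symm, by simpa using hw⟩
    refine ⟨⟨(l₁.length, l₂.length), l₁, l₂, v⟩, ?_, rfl⟩
    obtain ⟨h₁, h₂, hv⟩ := nestedList_cons_append.1 hl
    simp only [Finset.mem_sigma, Finset.HasAntidiagonal.mem_antidiagonal, mem_nestedLists]
    exact ⟨by simpa using hlen, ⟨trivial, h₁⟩, ⟨trivial, h₂⟩, hv⟩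

/-- The polynomial counting nested lists of length `m` by the contacts of the first component. -/
noncomputable def contactPolynomial (m : ℕ) : Polynomial ℤ :=
  ∑ l ∈ nestedLists m, Polynomial.X ^ (contacts (l.map Prod.fst)).card

theorem contactPolynomial_zero : contactPolynomial 0 = Polynomial.X := by
  have : contacts [] = {0} := by
    ext v
    cases v <;> simp [mem_contacts, ClosedPrefix]
  simp [contactPolynomial, nestedLists, this]

theorem eval_one_contactPolynomial (m : ℕ) :
    (contactPolynomial m).eval 1 = (nestedLists m).card := by
  simp [contactPolynomial, Polynomial.eval_finsetSum]

theorem sub_one_mul_contactPolynomial_succ (m : ℕ) :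
    (Polynomial.X - 1) * contactPolynomial (m + 1) =
      Polynomial.X * ∑ p ∈ Finset.HasAntidiagonal.antidiagonal m,
        (contactPolynomial p.1 - Polynomial.C ((contactPolynomial p.1).eval 1)) *
          contactPolynomial p.2 := by
  rw [contactPolynomial, sum_nestedLists_succ, Finset.mul_sum, Finset.mul_sum]
  refine Finset.sum_congr rfl fun p _ => ?_
  have hsub : contactPolynomial p.1 - Polynomial.C ((contactPolynomial p.1).eval 1) =
      ∑ l ∈ nestedLists p.1,
        ((Polynomial.X : Polynomial ℤ) ^ (contacts (l.map Prod.fst)).card - 1) := by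
    rw [eval_one_contactPolynomial, contactPolynomial, Finset.sum_sub_distrib]
    simp
  rw [hsub, contactPolynomial, Finset.sum_mul_sum, Finset.mul_sum, Finset.mul_sum]
  refine Finset.sum_congr rfl fun l₁ hl₁ => ?_
  rw [Finset.mul_sum, Finset.mul_sum]
  refine Finset.sum_congr rfl fun l₂ _ => ?_
  rw [← mul_assoc, ← sub_one_mul_sum_pow_card_filter_le, mul_assoc, Finset.sum_mul]
  congr 1
  refine Finset.sum_congr rfl fun v hv => ?_
  rw [List.map_cons, List.map_append, card_contacts_cons,
    card_contacts_append _ (mem_contacts.1 hv).le_length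
      (mem_nestedLists.1 hl₁).2.1.closedPrefix_length, pow_add]

theorem catalyticEquation_contactPolynomial :
    CatalyticEquation (PowerSeries.mk contactPolynomial) := by
  have hC : (PowerSeries.C Polynomial.X - 1 : PowerSeries (Polynomial ℤ)) =
    PowerSeries.C (Polynomial.X - 1) := by simp
  ext1 n
  rw [hC, map_add, PowerSeries.coeff_C_mul, PowerSeries.coeff_C_mul,
    PowerSeries.coeff_C_mul n (PowerSeries.X * _), PowerSeries.coeff_mk]
  cases n with
  | zero =>
    rw [PowerSeries.coeff_zero_X_mul, contactPolynomial_zero, PowerSeries.coeff_zero_C, mul_zero,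
      add_zero]
  | succ n =>
    rw [PowerSeries.coeff_succ_X_mul, PowerSeries.coeff_mul, sub_one_mul_contactPolynomial_succ,
      PowerSeries.coeff_succ_C, mul_zero, zero_add]
    simp [specializeOne]

/-- If `N` is the number of ordered pairs `(R₁, R₂)` of transfer systems on
`Fin (n+1)` with `R₁` contained in `R₂` (these correspond bijectively to
premodel structures on `[n]`), then `(n+1)(n+2) * N = 2 * C(4n+5, n)`. -/
theorem card_nested_pairs_of_transfer_systems (n : ℕ) :
    (n + 1) * (n + 2) *
      Nat.card {p : TransferSystem (Fin (n + 1)) × TransferSystem (Fin (n + 1)) //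
        ∀ x y, p.1.rel x y → p.2.rel x y} =
      2 * Nat.choose (4 * n + 5) n := by
  have h := catalyticEquation_contactPolynomial.mul_coeff_specializeOne n
  rw [specializeOne, PowerSeries.coeff_map, PowerSeries.coeff_mk, Polynomial.coe_evalRingHom,
    eval_one_contactPolynomial] at h
  rw [card_nested_transferSystem]
  exact_mod_cast h
end

section
/- Define real sequences Q(n) = C(2n+1, n) and P(n) = (2 / ((n+1)(n+2))) · C(4n+5, n) (the numbers of Quillen model structures and of premodel structures on [n], respectively). Then Q(n)/P(n) ~ c · 2^{d·n} · n² as n → ∞, i.e., the sequence (Q(n)/P(n)) / (c · 2^{d·n} · n²) tends to 1, where c = 243·√(3/2)/1024 and d = 3·log₂(3) − 6. -/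
open Filter Topology Stirling

lemma factorial_eq_stirlingSeq_mul {n : ℕ} (hn : n ≠ 0) :
    (n.factorial : ℝ) = stirlingSeq n * (√(2 * n) * (n / Real.exp 1) ^ n) := by
  have : 0 < (n : ℝ) := by positivity
  rw [stirlingSeq]
  exact (div_mul_cancel₀ _ (by positivity)).symm

/-- In the Stirling approximation of `(2n)! (3n)! / (n! (4n)!)` the powers of `e` and of `n`
cancel. -/
lemma factorial_ratio_eq_stirlingSeq_ratio {n : ℕ} (hn : n ≠ 0) :
    ((2 * n).factorial * (3 * n).factorial / (n.factorial * (4 * n).factorial) : ℝ) =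
      stirlingSeq (2 * n) * stirlingSeq (3 * n) / (stirlingSeq n * stirlingSeq (4 * n)) *
        (√(3 / 2) * (27 / 64) ^ n) := by
  have hpos : 0 < (n : ℝ) := by positivity
  have hsqrt : √(2 * ((2 * n : ℕ) : ℝ)) * √(2 * ((3 * n : ℕ) : ℝ)) =
      √(3 / 2) * (√(2 * n) * √(2 * ((4 * n : ℕ) : ℝ))) := by
    rw [← Real.sqrt_mul (by positivity), ← Real.sqrt_mul (by positivity),
      ← Real.sqrt_mul (by positivity)]
    congr 1
    push_cast
    ring
  have hpow : (((2 * n : ℕ) : ℝ) / Real.exp 1) ^ (2 * n) *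
      (((3 * n : ℕ) : ℝ) / Real.exp 1) ^ (3 * n) =
      (27 / 64) ^ n * ((n / Real.exp 1) ^ n * (((4 * n : ℕ) : ℝ) / Real.exp 1) ^ (4 * n)) := by
    simp only [pow_mul, ← mul_pow]
    congr 1
    push_cast
    ring
  have hs : ∀ {k : ℕ}, k ≠ 0 → stirlingSeq k ≠ 0 := fun {k} hk ↦ by
    have : 0 < (k : ℝ) := by positivity
    rw [stirlingSeq]
    positivity
  rw [factorial_eq_stirlingSeq_mul hn, factorial_eq_stirlingSeq_mul (n := 2 * n) (by omega),
    factorial_eq_stirlingSeq_mul (n := 3 * n) (by omega),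
    factorial_eq_stirlingSeq_mul (n := 4 * n) (by omega), div_mul_eq_mul_div]
  have h₁ := hs hn
  have h₄ := hs (k := 4 * n) (by omega)
  rw [div_eq_div_iff (by positivity) (by positivity)]
  linear_combination (stirlingSeq (2 * n) * stirlingSeq (3 * n) * stirlingSeq n *
      stirlingSeq (4 * n)) *
    ((((2 * n : ℕ) : ℝ) / Real.exp 1) ^ (2 * n) * (((3 * n : ℕ) : ℝ) / Real.exp 1) ^ (3 * n) *
      hsqrt + √(3 / 2) * (√(2 * n) * √(2 * ((4 * n : ℕ) : ℝ))) * hpow)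

lemma choose_ratio_eq_factorial_ratio (n : ℕ) :
    ((2 * n + 1).choose n / (4 * n + 5).choose n : ℝ) =
      (2 * n).factorial * (3 * n).factorial / (n.factorial * (4 * n).factorial) *
        ((2 * n + 1) / (n + 1) * (((3 * n + 1) * (3 * n + 2) * (3 * n + 3) * (3 * n + 4) *
          (3 * n + 5)) / ((4 * n + 1) * (4 * n + 2) * (4 * n + 3) * (4 * n + 4) *
          (4 * n + 5)))) := by
  rw [Nat.cast_choose ℝ (show n ≤ 2 * n + 1 by omega),
    Nat.cast_choose ℝ (show n ≤ 4 * n + 5 by omega),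
    show 2 * n + 1 - n = n + 1 by omega, show 4 * n + 5 - n = 3 * n + 5 by omega]
  simp only [Nat.factorial_succ]
  push_cast
  have h₁ : (n.factorial : ℝ) ≠ 0 := by positivity
  have h₃ : ((3 * n).factorial : ℝ) ≠ 0 := by positivity
  have h₄ : ((4 * n).factorial : ℝ) ≠ 0 := by positivity
  field_simp
  ring

lemma tendsto_linear_div_linear (a b c : ℝ) {d : ℝ} (hd : d ≠ 0) :
    Tendsto (fun n : ℕ ↦ (c * n + a) / (d * n + b)) atTop (𝓝 (c / d)) := by
  simpa only [add_comm] using tendsto_add_mul_div_add_mul_atTop_nhds a b c hd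

lemma tendsto_stirlingSeq_ratio :
    Tendsto (fun n : ℕ ↦ stirlingSeq (2 * n) * stirlingSeq (3 * n) /
      (stirlingSeq n * stirlingSeq (4 * n))) atTop (𝓝 1) := by
  have hmul : ∀ k : ℕ, 0 < k → Tendsto (fun n : ℕ ↦ stirlingSeq (k * n)) atTop (𝓝 √Real.pi) :=
    fun k hk ↦ tendsto_stirlingSeq_sqrt_pi.comp (tendsto_id.const_mul_atTop' hk)
  have hpi : √Real.pi * √Real.pi ≠ 0 := by positivity
  rw [← div_self hpi]
  exact ((hmul 2 two_pos).mul (hmul 3 three_pos)).div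
    (tendsto_stirlingSeq_sqrt_pi.mul (hmul 4 four_pos)) hpi

lemma two_rpow_three_mul_logb_sub_six_mul (n : ℕ) :
    (2 : ℝ) ^ ((3 * Real.logb 2 3 - 6) * (n : ℝ)) = (27 / 64) ^ n := by
  rw [Real.rpow_mul_natCast two_pos.le, Real.rpow_sub two_pos, mul_comm 3,
    Real.rpow_mul two_pos.le, Real.rpow_logb two_pos (by norm_num) three_pos]
  norm_num


/-- With `Q n = C(2n+1, n)` the number of Quillen model structures on `[n]` and
`P n = (2 / ((n+1)(n+2))) * C(4n+5, n)` the number of premodel structures on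
`[n]`, one has `Q n / P n ~ c * 2^(d*n) * n^2` as `n → ∞`, where
`c = 243 * √(3/2) / 1024` and `d = 3 * log₂ 3 - 6`. -/
theorem model_premodel_ratio_asymptotics :
    Filter.Tendsto
      (fun n : ℕ =>
        ((Nat.choose (2 * n + 1) n : ℝ) /
            ((2 / (((n : ℝ) + 1) * ((n : ℝ) + 2))) * (Nat.choose (4 * n + 5) n : ℝ))) /
          ((243 * Real.sqrt (3 / 2) / 1024) *
            (2 : ℝ) ^ ((3 * Real.logb 2 3 - 6) * (n : ℝ)) * (n : ℝ) ^ 2))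
      Filter.atTop (nhds 1) := by
  have hrat : Tendsto (fun n : ℕ ↦ (1024 / 243 : ℝ) *
      (((1 * n + 2) / (1 * n + 0)) * ((2 * n + 1) / (2 * n + 0)) *
        ((3 * n + 1) / (4 * n + 1)) * ((3 * n + 2) / (4 * n + 2)) * ((3 * n + 3) / (4 * n + 3)) *
        ((3 * n + 4) / (4 * n + 4)) * ((3 * n + 5) / (4 * n + 5)))) atTop (𝓝 1) := by
    have h := fun i : ℝ ↦ tendsto_linear_div_linear i i 3 (d := 4) four_ne_zero
    have := (((((((tendsto_linear_div_linear 2 0 1 one_ne_zero).mul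
      (tendsto_linear_div_linear 1 0 2 two_ne_zero)).mul (h 1)).mul (h 2)).mul (h 3)).mul
      (h 4)).mul (h 5)).const_mul (1024 / 243)
    norm_num at this ⊢
    exact this
  have hlim := tendsto_stirlingSeq_ratio.mul hrat
  rw [one_mul] at hlim
  refine hlim.congr' ?_
  filter_upwards [eventually_ne_atTop 0] with n hn
  have hpos : 0 < (n : ℝ) := by positivity
  rw [two_rpow_three_mul_logb_sub_six_mul, mul_comm (2 / _),
    ← div_div ((2 * n + 1).choose n : ℝ), choose_ratio_eq_factorial_ratio,
    factorial_ratio_eq_stirlingSeq_ratio hn]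
  generalize stirlingSeq (2 * n) * stirlingSeq (3 * n) / (stirlingSeq n * stirlingSeq (4 * n)) = S
  have hsqrt : √(3 / 2 : ℝ) ≠ 0 := by positivity
  generalize √(3 / 2 : ℝ) = r at hsqrt ⊢
  have hpow : ((27 : ℝ) / 64) ^ n ≠ 0 := by positivity
  generalize ((27 : ℝ) / 64) ^ n = p at hpow ⊢
  field_simp
  ring
end
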